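/- arXiv:1906.10722 — 4 statements merged into one kernel-verified Lean document; each statement's English description precedes it below -/
import Mathlib

section
/- Let κ, x₁, x₂ ∈ ℝ with x₂ ≠ 0 and x₁ − κx₂ ≠ 0, and let τ = u + iv be in the upper half-plane. Then M₂(κ; x₁, x₂) = −(x₁x₂/(2v)) e^{2πiτ(x₁²+x₂²)/(4v)} J(x₁, x₂; τ) − ((x₂+κx₁)(x₁−κx₂)/(2(1+κ²)v)) e^{2πiτ((x₂+κx₁)²+(x₁−κx₂)²)/(4(1+κ²)v)} J((x₂+κx₁)/√(1+κ²), (x₁−κx₂)/√(1+κ²); τ), where J(y₁,y₂;τ) := ∫_{−τ̄}^{i∞} [e^{πi y₁² w₁/(2v)}/√(−i(w₁+τ))] ∫_{w₁}^{i∞} [e^{πi y₂² w₂/(2v)}/√(−i(w₂+τ))] dw₂ dw₁, the outer integral being along the vertical path w₁ = −τ̄ + it₁ (t₁ ∈ (0,∞)), the inner along w₂ = w₁ + it₂ (t₂ ∈ (0,∞)), and √ denoting the principal branch of the square root. -/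
open MeasureTheory Complex

/-- The function `M₂(κ; x₁, x₂)`, defined by the double integral
`−(1/π²) ∫_{ℝ²} e^{−π(u₁−ix₁)² − π(u₂−ix₂)² − 2πi(x₁(u₁−ix₁) + x₂(u₂−ix₂))}
/((u₂−ix₂)((u₁−ix₁) − κ(u₂−ix₂))) du₁ du₂`. -/
noncomputable def M2 (κ x₁ x₂ : ℝ) : ℂ :=
  -(1 / (Real.pi : ℂ) ^ 2) * ∫ u : ℝ × ℝ,
    Complex.exp (-Real.pi * ((u.1 : ℂ) - Complex.I * x₁) ^ 2 -
        Real.pi * ((u.2 : ℂ) - Complex.I * x₂) ^ 2 -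
        2 * Real.pi * Complex.I *
          (x₁ * ((u.1 : ℂ) - Complex.I * x₁) + x₂ * ((u.2 : ℂ) - Complex.I * x₂))) /
      (((u.2 : ℂ) - Complex.I * x₂) *
        (((u.1 : ℂ) - Complex.I * x₁) - κ * ((u.2 : ℂ) - Complex.I * x₂)))

/-- The iterated Eichler-type integral `J(y₁,y₂;τ)`, with the outer integral along
`w₁ = −τ̄ + it₁` and the inner along `w₂ = w₁ + it₂`. -/
noncomputable def Jint (y₁ y₂ : ℝ) (τ : ℂ) : ℂ :=
  ∫ t₁ in Set.Ioi (0 : ℝ), ∫ t₂ in Set.Ioi (0 : ℝ),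
    (Complex.I * Complex.I) *
      (Complex.exp (Real.pi * Complex.I * y₁ ^ 2 * (-(starRingEnd ℂ) τ + Complex.I * t₁) /
            (2 * τ.im)) /
          (-Complex.I * ((-(starRingEnd ℂ) τ + Complex.I * t₁) + τ)) ^ ((1 : ℂ) / 2)) *
      (Complex.exp (Real.pi * Complex.I * y₂ ^ 2 *
            ((-(starRingEnd ℂ) τ + Complex.I * t₁) + Complex.I * t₂) / (2 * τ.im)) /
          (-Complex.I * (((-(starRingEnd ℂ) τ + Complex.I * t₁) + Complex.I * t₂) + τ)) ^
            ((1 : ℂ) / 2))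


namespace Eich

noncomputable def g (y s : ℝ) : ℝ := (√s)⁻¹ * Real.exp (-(Real.pi * s * y ^ 2))

noncomputable def D (y₁ y₂ : ℝ) : ℝ :=
  ∫ s in Set.Ioi (1 : ℝ), g y₁ s * ∫ r in Set.Ioi s, g y₂ r

lemma affine_sub (f : ℝ → ℂ) (a : ℝ) {c : ℝ} (hc : 0 < c) :
    ∫ t in Set.Ioi (0 : ℝ), f (a + t / c) = (c : ℂ) * ∫ s in Set.Ioi a, f s := by
  have h1 := integral_comp_mul_left_Ioi (fun t => f (a + t)) 0 (inv_pos.mpr hc)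
  have h2 : ∫ t in Set.Ioi (0 : ℝ), f (a + t) = ∫ s in Set.Ioi a, f s := by
    have := (measurePreserving_add_left (volume : Measure ℝ) a).setIntegral_preimage_emb
      (measurableEmbedding_addLeft a) f (Set.Ioi a)
    rw [← this]
    congr 2
    ext x; simp
  rw [mul_zero, h2, inv_inv] at h1
  rw [← Complex.real_smul, ← h1]
  congr 1 with t
  ring_nf

lemma sqrt_cpow (a : ℝ) (ha : 0 ≤ a) : (a : ℂ) ^ ((1 : ℂ) / 2) = ((√a : ℝ) : ℂ) := by
  rw [Real.sqrt_eq_rpow, Complex.ofReal_cpow ha]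
  norm_num

lemma conj_eq (τ : ℂ) : (starRingEnd ℂ) τ = τ - 2 * Complex.I * τ.im := by
  apply Complex.ext <;> simp <;> ring

lemma J_eq (y₁ y₂ : ℝ) (τ : ℂ) (hτ : 0 < τ.im) :
    Complex.exp (2 * Real.pi * Complex.I * τ * (((y₁ ^ 2 + y₂ ^ 2) / (4 * τ.im) : ℝ) : ℂ)) *
      Jint y₁ y₂ τ = -((2 * τ.im : ℝ) : ℂ) * (D y₁ y₂ : ℂ) := by
  set v := τ.im with hv
  have hc : (0 : ℝ) < 2 * v := by positivity
  have hvc : (v : ℂ) ≠ 0 := by exact_mod_cast hτ.ne'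
  have hD : (D y₁ y₂ : ℂ) = ∫ s in Set.Ioi (1 : ℝ), (g y₁ s : ℂ) * ∫ r in Set.Ioi s, (g y₂ r : ℂ) := by
    unfold D
    rw [← integral_complex_ofReal]
    congr 1 with s
    rw [Complex.ofReal_mul, ← integral_complex_ofReal]
  have key : ∀ t₁ ∈ Set.Ioi (0 : ℝ), ∀ t₂ ∈ Set.Ioi (0 : ℝ),
      Complex.exp (2 * Real.pi * Complex.I * τ * (((y₁ ^ 2 + y₂ ^ 2) / (4 * v) : ℝ) : ℂ)) *
      ((Complex.I * Complex.I) *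
      (Complex.exp (Real.pi * Complex.I * y₁ ^ 2 * (-(starRingEnd ℂ) τ + Complex.I * t₁) /
            (2 * v)) /
          (-Complex.I * ((-(starRingEnd ℂ) τ + Complex.I * t₁) + τ)) ^ ((1 : ℂ) / 2)) *
      (Complex.exp (Real.pi * Complex.I * y₂ ^ 2 *
            ((-(starRingEnd ℂ) τ + Complex.I * t₁) + Complex.I * t₂) / (2 * v)) /
          (-Complex.I * (((-(starRingEnd ℂ) τ + Complex.I * t₁) + Complex.I * t₂) + τ)) ^
            ((1 : ℂ) / 2))) =
      (-((2 * v : ℝ) : ℂ)⁻¹ * (g y₁ (1 + t₁ / (2 * v)) : ℂ)) *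
        (g y₂ ((1 + t₁ / (2 * v)) + t₂ / (2 * v)) : ℂ) := by
    intro t₁ h₁ t₂ h₂
    have h₁ : 0 < t₁ := h₁
    have h₂ : 0 < t₂ := h₂
    have e1 : -Complex.I * ((-(starRingEnd ℂ) τ + Complex.I * t₁) + τ)
        = ((2 * v * (1 + t₁ / (2 * v)) : ℝ) : ℂ) := by
      rw [conj_eq, ← hv]; push_cast; field_simp; ring_nf; simp; try ring
    have e2 : -Complex.I * (((-(starRingEnd ℂ) τ + Complex.I * t₁) + Complex.I * t₂) + τ)
        = ((2 * v * ((1 + t₁ / (2 * v)) + t₂ / (2 * v)) : ℝ) : ℂ) := by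
      rw [conj_eq, ← hv]; push_cast; field_simp; ring_nf; simp; try ring
    rw [e1, e2, sqrt_cpow _ (by positivity), sqrt_cpow _ (by positivity), g, g,
      Real.sqrt_mul hc.le, Real.sqrt_mul hc.le, I_mul_I]
    have e3 : Complex.exp (2 * Real.pi * Complex.I * τ * (((y₁ ^ 2 + y₂ ^ 2) / (4 * v) : ℝ) : ℂ)) *
       (Complex.exp (Real.pi * Complex.I * y₁ ^ 2 * (-(starRingEnd ℂ) τ + Complex.I * t₁) /
            (2 * v)) * Complex.exp (Real.pi * Complex.I * y₂ ^ 2 *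
            ((-(starRingEnd ℂ) τ + Complex.I * t₁) + Complex.I * t₂) / (2 * v))) =
       ((Real.exp (-(Real.pi * (1 + t₁ / (2 * v)) * y₁ ^ 2)) : ℝ) : ℂ) *
       ((Real.exp (-(Real.pi * ((1 + t₁ / (2 * v)) + t₂ / (2 * v)) * y₂ ^ 2)) : ℝ) : ℂ) := by
      rw [← Complex.exp_add, ← Complex.exp_add, Complex.ofReal_exp, Complex.ofReal_exp,
        ← Complex.exp_add]
      congr 1
      rw [conj_eq, ← hv]; push_cast; field_simp; ring_nf; simp; try ring
    have e4 : ((√(2 * v) : ℝ) : ℂ) * ((√(2 * v) : ℝ) : ℂ) = ((2 * v : ℝ) : ℂ) := by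
      rw [← Complex.ofReal_mul, Real.mul_self_sqrt hc.le]
    rw [← e4]
    push_cast at e3 ⊢
    simp only [div_eq_mul_inv, mul_inv] at e3 ⊢
    linear_combination (-1 : ℂ) * ((√(2 * v) : ℝ) : ℂ)⁻¹ * ((√(2 * v) : ℝ) : ℂ)⁻¹ *
      ((√(1 + t₁ * (2⁻¹ * v⁻¹)) : ℝ) : ℂ)⁻¹ * ((√((1 + t₁ * (2⁻¹ * v⁻¹)) + t₂ * (2⁻¹ * v⁻¹)) : ℝ) : ℂ)⁻¹ * e3
  unfold Jint
  rw [← integral_const_mul, hD]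
  have s1 : ∀ t₁ ∈ Set.Ioi (0 : ℝ), 
      Complex.exp (2 * Real.pi * Complex.I * τ * (((y₁ ^ 2 + y₂ ^ 2) / (4 * v) : ℝ) : ℂ)) *
      (∫ t₂ in Set.Ioi (0 : ℝ), (Complex.I * Complex.I) *
      (Complex.exp (Real.pi * Complex.I * y₁ ^ 2 * (-(starRingEnd ℂ) τ + Complex.I * t₁) /
            (2 * v)) /
          (-Complex.I * ((-(starRingEnd ℂ) τ + Complex.I * t₁) + τ)) ^ ((1 : ℂ) / 2)) *
      (Complex.exp (Real.pi * Complex.I * y₂ ^ 2 *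
            ((-(starRingEnd ℂ) τ + Complex.I * t₁) + Complex.I * t₂) / (2 * v)) /
          (-Complex.I * (((-(starRingEnd ℂ) τ + Complex.I * t₁) + Complex.I * t₂) + τ)) ^
            ((1 : ℂ) / 2))) =
       (fun s : ℝ => -((g y₁ s : ℂ) * ∫ r in Set.Ioi s, (g y₂ r : ℂ))) (1 + t₁ / (2 * v)) := by
    intro t₁ h₁
    rw [← integral_const_mul, setIntegral_congr_fun measurableSet_Ioi (key t₁ h₁),
      integral_const_mul, affine_sub (fun r => (g y₂ r : ℂ)) _ hc]
    have : ((2 * v : ℝ) : ℂ) ≠ 0 := by exact_mod_cast hc.ne'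
    simp only
    field_simp
  rw [setIntegral_congr_fun measurableSet_Ioi s1,
    affine_sub (fun s : ℝ => -((g y₁ s : ℂ) * ∫ r in Set.Ioi s, (g y₂ r : ℂ))) _ hc, integral_neg]
  ring

lemma rot_mp (κ : ℝ) : MeasurePreserving (fun u : ℝ × ℝ =>
    (((u.2 + κ * u.1) / √(1 + κ ^ 2), (u.1 - κ * u.2) / √(1 + κ ^ 2)) : ℝ × ℝ)) volume volume := by
  have h0 : 0 < 1 + κ ^ 2 := by positivity
  set c := √(1 + κ ^ 2) with hc
  have hc0 : c ≠ 0 := (Real.sqrt_pos.mpr h0).ne'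
  have hcc : c ^ 2 = 1 + κ ^ 2 := Real.sq_sqrt h0.le
  let L := Matrix.toLin (Module.Basis.finTwoProd ℝ) (Module.Basis.finTwoProd ℝ) !![κ / c, 1 / c; 1 / c, -κ / c]
  have hdet : LinearMap.det L = -1 := by
    simp only [L, LinearMap.det_toLin, Matrix.det_fin_two_of]
    field_simp
    linarith
  have := Measure.map_linearMap_addHaar_eq_smul_addHaar (volume : Measure (ℝ × ℝ)) (f := L) (by rw [hdet]; norm_num)
  rw [hdet] at this
  have hL : (fun u : ℝ × ℝ =>
    (((u.2 + κ * u.1) / c, (u.1 - κ * u.2) / c) : ℝ × ℝ)) = L := by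
    ext u <;> simp [L, Matrix.toLin_finTwoProd_apply] <;> ring
  rw [hL]
  refine ⟨by rw [← hL]; fun_prop, ?_⟩
  simpa using this

lemma integral_odd (f : ℝ → ℂ) (hf : ∀ x, f (-x) = -f x) : ∫ x, f x = 0 := by
  have h := integral_neg_eq_self f volume
  simp only [hf, integral_neg] at h
  have h2 : (2 : ℂ) * ∫ x, f x = 0 := by linear_combination -h
  simpa using h2

lemma gauss (s : ℝ) (hs : 0 < s) : ∫ u : ℝ, Real.exp (-(Real.pi * s) * u ^ 2) = (√s)⁻¹ := by
  rw [integral_gaussian, ← Real.sqrt_inv]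
  congr 1
  field_simp

lemma La (a s : ℝ) (hs : 0 < s) :
    ∫ u : ℝ, ((u : ℂ) + I * a) * (Real.exp (-(Real.pi * s * (u ^ 2 + a ^ 2))) : ℂ) =
      I * a * (g a s : ℂ) := by
  have hb : 0 < Real.pi * s := by positivity
  have e : ∀ u : ℝ, ((u : ℂ) + I * a) * (Real.exp (-(Real.pi * s * (u ^ 2 + a ^ 2))) : ℂ) =
      (Real.exp (-(Real.pi * s * a ^ 2)) : ℂ) *
        (((u * Real.exp (-(Real.pi * s) * u ^ 2) : ℝ) : ℂ) +
          I * a * ((Real.exp (-(Real.pi * s) * u ^ 2) : ℝ) : ℂ)) := by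
    intro u
    have : Real.exp (-(Real.pi * s * (u ^ 2 + a ^ 2))) =
        Real.exp (-(Real.pi * s * a ^ 2)) * Real.exp (-(Real.pi * s) * u ^ 2) := by
      rw [← Real.exp_add]; ring_nf
    rw [this]; push_cast; ring
  simp_rw [e]
  rw [integral_const_mul, integral_add, integral_const_mul, integral_complex_ofReal,
    integral_complex_ofReal, gauss s hs]
  · rw [← integral_complex_ofReal, integral_odd]
    · simp only [g]; push_cast; ring
    · intro x; simp
  · exact (integrable_mul_exp_neg_mul_sq hb).ofReal
  · exact ((integrable_exp_neg_mul_sq hb).ofReal).const_mul _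

lemma exp_tail (R s : ℝ) (hR : 0 < R) :
    ∫ r in Set.Ioi s, Real.exp (-(Real.pi * r * R)) = Real.exp (-(Real.pi * s * R)) / (Real.pi * R) := by
  have h := integral_exp_mul_Ioi (a := -(Real.pi * R)) (by have := Real.pi_pos; nlinarith [mul_pos this hR]) s
  rw [neg_div_neg_eq] at h
  convert h using 3
  · ring_nf
  · ring_nf

lemma exp_tail_int (R s : ℝ) (hR : 0 < R) :
    Integrable (fun r => Real.exp (-(Real.pi * r * R))) (volume.restrict (Set.Ioi s)) := by
  have h := integrableOn_exp_mul_Ioi (a := -(Real.pi * R)) (by have := Real.pi_pos; nlinarith [mul_pos this hR]) s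
  refine h.congr_fun (fun r _ => ?_) measurableSet_Ioi
  simp only; ring_nf

lemma K_int (x s : ℝ) (hx : x ≠ 0) (hs : 0 < s) :
    Integrable (Function.uncurry fun (u r : ℝ) => Real.exp (-(Real.pi * r * (u ^ 2 + x ^ 2))))
      ((volume : Measure ℝ).prod (volume.restrict (Set.Ioi s))) := by
  have hb : 0 < Real.pi * s := by positivity
  have hx2 : 0 < x ^ 2 := by positivity
  refine Integrable.mono' ((integrable_exp_neg_mul_sq hb).mul_prod (exp_tail_int (x ^ 2) s hx2)) ?_ ?_
  · exact Continuous.aestronglyMeasurable (by simp only [Function.uncurry_def]; fun_prop)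
  · have : ∀ᵐ z : ℝ × ℝ ∂((volume : Measure ℝ).prod (volume.restrict (Set.Ioi s))), z.2 ∈ Set.Ioi s :=
      Measure.quasiMeasurePreserving_snd.ae (ae_restrict_mem measurableSet_Ioi)
    filter_upwards [this] with z hz
    have hz : s < z.2 := hz
    rw [Function.uncurry_def, Real.norm_eq_abs, abs_of_pos (Real.exp_pos _), ← Real.exp_add]
    apply Real.exp_le_exp.mpr
    have := mul_nonneg (mul_nonneg Real.pi_pos.le (sub_nonneg.mpr hz.le)) (sq_nonneg z.1)
    nlinarith

lemma K_eq (x s : ℝ) (hx : x ≠ 0) (hs : 0 < s) :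
    ∫ u : ℝ, Real.exp (-(Real.pi * s * (u ^ 2 + x ^ 2))) / (u ^ 2 + x ^ 2) =
      Real.pi * ∫ r in Set.Ioi s, g x r := by
  have hx2 : 0 < x ^ 2 := by positivity
  have h := integral_integral_swap (K_int x s hx hs)
  have e1 : ∀ u : ℝ, ∫ r in Set.Ioi s, Real.exp (-(Real.pi * r * (u ^ 2 + x ^ 2))) =
      Real.pi⁻¹ * (Real.exp (-(Real.pi * s * (u ^ 2 + x ^ 2))) / (u ^ 2 + x ^ 2)) := by
    intro u
    rw [exp_tail _ _ (by positivity)]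
    have : u ^ 2 + x ^ 2 ≠ 0 := by positivity
    have := Real.pi_ne_zero
    field_simp
  have e2 : ∀ r ∈ Set.Ioi s, ∫ u : ℝ, Real.exp (-(Real.pi * r * (u ^ 2 + x ^ 2))) = g x r := by
    intro r hr
    have hr0 : 0 < r := hs.trans hr
    have : ∀ u : ℝ, Real.exp (-(Real.pi * r * (u ^ 2 + x ^ 2))) =
        Real.exp (-(Real.pi * r * x ^ 2)) * Real.exp (-(Real.pi * r) * u ^ 2) := by
      intro u; rw [← Real.exp_add]; ring_nf
    simp_rw [this]
    rw [integral_const_mul, gauss r hr0, g, mul_comm]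
  simp_rw [e1] at h
  rw [integral_const_mul, setIntegral_congr_fun measurableSet_Ioi e2] at h
  rw [← h, mul_inv_cancel_left₀ Real.pi_ne_zero]

lemma den_ne (u x : ℝ) (hx : x ≠ 0) : (u : ℂ) - I * x ≠ 0 := by
  intro h
  have := congrArg Complex.im h
  simp at this
  exact hx this

lemma Lb (x s : ℝ) (hx : x ≠ 0) (hs : 0 < s) :
    ∫ u : ℝ, (Real.exp (-(Real.pi * s * (u ^ 2 + x ^ 2))) : ℂ) / ((u : ℂ) - I * x) =
      I * x * ((Real.pi * ∫ r in Set.Ioi s, g x r : ℝ) : ℂ) := by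
  have hx2 : 0 < x ^ 2 := by positivity
  have hb : 0 < Real.pi * s := by positivity
  rw [← K_eq x s hx hs, ← integral_complex_ofReal, ← integral_const_mul]
  have e : ∀ u : ℝ, (Real.exp (-(Real.pi * s * (u ^ 2 + x ^ 2))) : ℂ) / ((u : ℂ) - I * x) =
     ((u * (Real.exp (-(Real.pi * s * (u ^ 2 + x ^ 2))) / (u ^ 2 + x ^ 2)) : ℝ) : ℂ) +
      I * x * ((Real.exp (-(Real.pi * s * (u ^ 2 + x ^ 2))) / (u ^ 2 + x ^ 2) : ℝ) : ℂ) := by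
    intro u
    have h1 := den_ne u x hx
    have h2 : ((u : ℂ) ^ 2 + (x : ℂ) ^ 2) ≠ 0 := by
      have : u ^ 2 + x ^ 2 ≠ 0 := by positivity
      exact_mod_cast this
    rw [div_eq_iff h1]
    have h3 : ((Real.exp (-(Real.pi * s * (u ^ 2 + x ^ 2))) / (u ^ 2 + x ^ 2) : ℝ) : ℂ) * ((u : ℂ) ^ 2 + (x : ℂ) ^ 2) =
        (Real.exp (-(Real.pi * s * (u ^ 2 + x ^ 2))) : ℂ) := by
      rw [Complex.ofReal_div]; push_cast; exact div_mul_cancel₀ _ h2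
    rw [Complex.ofReal_mul, ← h3]
    linear_combination (((Real.exp (-(Real.pi * s * (u ^ 2 + x ^ 2))) / (u ^ 2 + x ^ 2) : ℝ) : ℂ) * (x : ℂ) ^ 2) * I_mul_I
  have hi : Integrable (fun u : ℝ => Real.exp (-(Real.pi * s * (u ^ 2 + x ^ 2))) / (u ^ 2 + x ^ 2)) := by
    have := (K_int x s hx hs).integral_prod_left
    refine (this.const_mul Real.pi).congr (Filter.Eventually.of_forall fun u => ?_)
    simp only [Function.uncurry_apply_pair]
    rw [exp_tail _ _ (by positivity)]
    have : u ^ 2 + x ^ 2 ≠ 0 := by positivity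
    have := Real.pi_ne_zero
    field_simp
  have hi2 : Integrable (fun u : ℝ => u * (Real.exp (-(Real.pi * s * (u ^ 2 + x ^ 2))) / (u ^ 2 + x ^ 2))) := by
    refine Integrable.mono' ((integrable_mul_exp_neg_mul_sq hb).norm.const_mul (1 / x ^ 2)) ?_ ?_
    · refine Continuous.aestronglyMeasurable ?_
      have : ∀ u : ℝ, u ^ 2 + x ^ 2 ≠ 0 := fun u => by positivity
      fun_prop (disch := assumption)
    · refine Filter.Eventually.of_forall fun u => ?_
      rw [norm_mul, norm_mul, norm_div, Real.norm_of_nonneg (Real.exp_pos _).le,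
        Real.norm_of_nonneg (Real.exp_pos _).le, Real.norm_of_nonneg (by positivity : 0 ≤ u ^ 2 + x ^ 2)]
      have h1 : Real.exp (-(Real.pi * s * (u ^ 2 + x ^ 2))) ≤ Real.exp (-(Real.pi * s) * u ^ 2) := by
        apply Real.exp_le_exp.mpr; nlinarith
      have h2 : Real.exp (-(Real.pi * s * (u ^ 2 + x ^ 2))) / (u ^ 2 + x ^ 2) ≤
          Real.exp (-(Real.pi * s) * u ^ 2) / x ^ 2 := by
        gcongr
        nlinarith [sq_nonneg u]
      calc _ ≤ ‖u‖ * (Real.exp (-(Real.pi * s) * u ^ 2) / x ^ 2) := by gcongr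
        _ = _ := by ring
  simp_rw [e]
  rw [integral_add hi2.ofReal (hi.ofReal.const_mul _), integral_odd, zero_add]
  intro u; push_cast; simp

noncomputable def P (x₁ x₂ : ℝ) (u : ℝ × ℝ) : ℂ :=
  ((u.1 : ℂ) + I * x₁) / ((u.2 : ℂ) - I * x₂) *
    ((Real.exp (-(Real.pi * (u.1 ^ 2 + x₁ ^ 2 + (u.2 ^ 2 + x₂ ^ 2)))) /
      (Real.pi * (u.1 ^ 2 + x₁ ^ 2 + (u.2 ^ 2 + x₂ ^ 2))) : ℝ) : ℂ)

lemma norm_den (u x : ℝ) : |x| ≤ ‖(u : ℂ) - I * x‖ := by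
  have := Complex.abs_im_le_norm ((u : ℂ) - I * x)
  simpa using this

lemma H_int (x₁ x₂ : ℝ) (hx : x₂ ≠ 0) :
    Integrable (Function.uncurry fun (u : ℝ × ℝ) (s : ℝ) =>
      ((u.1 : ℂ) + I * x₁) / ((u.2 : ℂ) - I * x₂) *
        (Real.exp (-(Real.pi * s * (u.1 ^ 2 + x₁ ^ 2 + (u.2 ^ 2 + x₂ ^ 2)))) : ℂ))
      ((volume : Measure (ℝ × ℝ)).prod (volume.restrict (Set.Ioi 1))) := by
  have hb : 0 < Real.pi := Real.pi_pos
  have hx2 : 0 < x₂ ^ 2 := by positivity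
  have i1 : Integrable (fun u : ℝ => |u| * Real.exp (-Real.pi * u ^ 2) + |x₁| * Real.exp (-Real.pi * u ^ 2)) := by
    refine Integrable.add ?_ ((integrable_exp_neg_mul_sq hb).const_mul _)
    refine (integrable_mul_exp_neg_mul_sq hb).norm.congr (Filter.Eventually.of_forall fun u => ?_)
    simp
  have i2 := (i1.mul_prod (ν := (volume : Measure ℝ)) (integrable_exp_neg_mul_sq hb)).const_mul (1 / |x₂|)
  have i3 := i2.mul_prod (exp_tail_int (x₂ ^ 2) 1 hx2)
  refine Integrable.mono' i3 ?_ ?_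
  · refine Continuous.aestronglyMeasurable ?_
    simp only [Function.uncurry_def]
    have : ∀ z : (ℝ × ℝ) × ℝ, (z.1.2 : ℂ) - I * x₂ ≠ 0 := fun z => den_ne _ _ hx
    fun_prop (disch := assumption)
  · have : ∀ᵐ z : (ℝ × ℝ) × ℝ ∂((volume : Measure (ℝ × ℝ)).prod (volume.restrict (Set.Ioi 1))), z.2 ∈ Set.Ioi (1 : ℝ) :=
      Measure.quasiMeasurePreserving_snd.ae (ae_restrict_mem measurableSet_Ioi)
    filter_upwards [this] with z hz
    obtain ⟨⟨u, w⟩, s⟩ := z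
    have hz : 1 < s := hz
    simp only [Function.uncurry_apply_pair]
    rw [norm_mul, norm_div, Complex.norm_real, Real.norm_of_nonneg (Real.exp_pos _).le]
    have h1 : ‖(u : ℂ) + I * x₁‖ ≤ |u| + |x₁| := by
      refine (norm_add_le _ _).trans ?_
      simp
    have h2 := norm_den w x₂
    have hx0 : 0 < |x₂| := abs_pos.mpr hx
    have h3 : Real.exp (-(Real.pi * s * (u ^ 2 + x₁ ^ 2 + (w ^ 2 + x₂ ^ 2)))) ≤
        Real.exp (-Real.pi * u ^ 2) * Real.exp (-Real.pi * w ^ 2) * Real.exp (-(Real.pi * s * x₂ ^ 2)) := by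
      rw [← Real.exp_add, ← Real.exp_add]
      apply Real.exp_le_exp.mpr
      have a1 := mul_nonneg (mul_nonneg hb.le (sub_nonneg.mpr hz.le)) (add_nonneg (sq_nonneg u) (sq_nonneg w))
      have a2 : 0 ≤ Real.pi * s * x₁ ^ 2 := by positivity
      nlinarith
    calc _ ≤ (|u| + |x₁|) / |x₂| * (Real.exp (-Real.pi * u ^ 2) * Real.exp (-Real.pi * w ^ 2) * Real.exp (-(Real.pi * s * x₂ ^ 2))) := by
          gcongr
      _ = _ := by ring

lemma P_eq (x₁ x₂ : ℝ) (hx : x₂ ≠ 0) (u : ℝ × ℝ) :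
    ∫ s in Set.Ioi (1 : ℝ), ((u.1 : ℂ) + I * x₁) / ((u.2 : ℂ) - I * x₂) *
        (Real.exp (-(Real.pi * s * (u.1 ^ 2 + x₁ ^ 2 + (u.2 ^ 2 + x₂ ^ 2)))) : ℂ) = P x₁ x₂ u := by
  rw [integral_const_mul, integral_complex_ofReal, exp_tail _ _ (by positivity), mul_one, P]

lemma P_int (x₁ x₂ : ℝ) (hx : x₂ ≠ 0) : Integrable (P x₁ x₂) := by
  have := (H_int x₁ x₂ hx).integral_prod_left
  refine this.congr (Filter.Eventually.of_forall fun u => ?_)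
  exact P_eq x₁ x₂ hx u

lemma P_integral (x₁ x₂ : ℝ) (hx : x₂ ≠ 0) :
    ∫ u, P x₁ x₂ u = -((Real.pi * x₁ * x₂ * D x₁ x₂ : ℝ) : ℂ) := by
  have h := integral_integral_swap (H_int x₁ x₂ hx)
  simp_rw [P_eq x₁ x₂ hx] at h
  rw [h]
  have e : ∀ s ∈ Set.Ioi (1 : ℝ), (∫ u : ℝ × ℝ, ((u.1 : ℂ) + I * x₁) / ((u.2 : ℂ) - I * x₂) *
        (Real.exp (-(Real.pi * s * (u.1 ^ 2 + x₁ ^ 2 + (u.2 ^ 2 + x₂ ^ 2)))) : ℂ)) =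
      ((-(Real.pi * x₁ * x₂) * (g x₁ s * ∫ r in Set.Ioi s, g x₂ r) : ℝ) : ℂ) := by
    intro s hs
    have hs0 : 0 < s := lt_trans one_pos hs
    have h := integral_prod_mul (μ := (volume : Measure ℝ)) (ν := (volume : Measure ℝ))
      (fun u : ℝ => ((u : ℂ) + I * x₁) * (Real.exp (-(Real.pi * s * (u ^ 2 + x₁ ^ 2))) : ℂ))
      (fun u : ℝ => (Real.exp (-(Real.pi * s * (u ^ 2 + x₂ ^ 2))) : ℂ) / ((u : ℂ) - I * x₂))
    rw [La x₁ s hs0, Lb x₂ s hx hs0] at h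
    have h2 : (∫ u : ℝ × ℝ, ((u.1 : ℂ) + I * x₁) / ((u.2 : ℂ) - I * x₂) *
        (Real.exp (-(Real.pi * s * (u.1 ^ 2 + x₁ ^ 2 + (u.2 ^ 2 + x₂ ^ 2)))) : ℂ)) =
        I * x₁ * (g x₁ s : ℂ) * (I * x₂ * ((Real.pi * ∫ r in Set.Ioi s, g x₂ r : ℝ) : ℂ)) := by
      rw [← h, Measure.volume_eq_prod]
      congr 1 with u
      have : Real.exp (-(Real.pi * s * (u.1 ^ 2 + x₁ ^ 2 + (u.2 ^ 2 + x₂ ^ 2)))) =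
        Real.exp (-(Real.pi * s * (u.1 ^ 2 + x₁ ^ 2))) * Real.exp (-(Real.pi * s * (u.2 ^ 2 + x₂ ^ 2))) := by
        rw [← Real.exp_add]; ring_nf
      rw [this, Complex.ofReal_mul]; ring
    rw [h2]
    push_cast
    linear_combination (x₁ * x₂ * (g x₁ s : ℂ) * Real.pi * ((∫ r in Set.Ioi s, g x₂ r : ℝ) : ℂ)) * I_mul_I
  rw [setIntegral_congr_fun measurableSet_Ioi e, integral_complex_ofReal, integral_const_mul, D]
  push_cast; ring

end Eich

theorem M2_eq_double_eichler (κ x₁ x₂ : ℝ) (hx₂ : x₂ ≠ 0) (hx : x₁ - κ * x₂ ≠ 0)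
    (τ : ℂ) (hτ : 0 < τ.im) :
    M2 κ x₁ x₂ =
      -((x₁ * x₂ / (2 * τ.im) : ℝ) : ℂ) *
          Complex.exp (2 * Real.pi * Complex.I * τ *
            (((x₁ ^ 2 + x₂ ^ 2) / (4 * τ.im) : ℝ) : ℂ)) * Jint x₁ x₂ τ -
        (((x₂ + κ * x₁) * (x₁ - κ * x₂) / (2 * (1 + κ ^ 2) * τ.im) : ℝ) : ℂ) *
          Complex.exp (2 * Real.pi * Complex.I * τ *
            ((((x₂ + κ * x₁) ^ 2 + (x₁ - κ * x₂) ^ 2) / (4 * (1 + κ ^ 2) * τ.im) : ℝ) : ℂ)) *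
          Jint ((x₂ + κ * x₁) / Real.sqrt (1 + κ ^ 2))
            ((x₁ - κ * x₂) / Real.sqrt (1 + κ ^ 2)) τ := by
  have h0 : 0 < 1 + κ ^ 2 := by positivity
  have hcp : 0 < √(1 + κ ^ 2) := Real.sqrt_pos.mpr h0
  have hcc : √(1 + κ ^ 2) ^ 2 = 1 + κ ^ 2 := Real.sq_sqrt h0.le
  have hy : (x₁ - κ * x₂) / √(1 + κ ^ 2) ≠ 0 := div_ne_zero hx hcp.ne'
  have hv2 : ((2 * τ.im : ℝ) : ℂ) ≠ 0 := by exact_mod_cast (by positivity : 2 * τ.im ≠ 0)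
  have J1 := Eich.J_eq x₁ x₂ τ hτ
  have J2 := Eich.J_eq ((x₂ + κ * x₁) / √(1 + κ ^ 2)) ((x₁ - κ * x₂) / √(1 + κ ^ 2)) τ hτ
  have hE : ((((x₂ + κ * x₁) / √(1 + κ ^ 2)) ^ 2 + ((x₁ - κ * x₂) / √(1 + κ ^ 2)) ^ 2) / (4 * τ.im)) =
      (((x₂ + κ * x₁) ^ 2 + (x₁ - κ * x₂) ^ 2) / (4 * (1 + κ ^ 2) * τ.im)) := by
    rw [div_pow, div_pow, hcc]; field_simp
  rw [hE] at J2
  rw [mul_assoc, J1, mul_assoc, J2]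
  have hA := Eich.P_integral x₁ x₂ hx₂
  have hB := Eich.P_integral ((x₂ + κ * x₁) / √(1 + κ ^ 2)) ((x₁ - κ * x₂) / √(1 + κ ^ 2)) hy
  have mp := Eich.rot_mp κ
  have hBi := Eich.P_int ((x₂ + κ * x₁) / √(1 + κ ^ 2)) ((x₁ - κ * x₂) / √(1 + κ ^ 2)) hy
  have hBi' := mp.integrable_comp_of_integrable hBi
  have hB' : ∫ u, (Eich.P ((x₂ + κ * x₁) / √(1 + κ ^ 2)) ((x₁ - κ * x₂) / √(1 + κ ^ 2)) ∘
      (fun u : ℝ × ℝ => (((u.2 + κ * u.1) / √(1 + κ ^ 2), (u.1 - κ * u.2) / √(1 + κ ^ 2)) : ℝ × ℝ))) u =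
      ∫ u, Eich.P ((x₂ + κ * x₁) / √(1 + κ ^ 2)) ((x₁ - κ * x₂) / √(1 + κ ^ 2)) u := by
    have := integral_map (μ := volume) mp.measurable.aemeasurable
      (f := Eich.P ((x₂ + κ * x₁) / √(1 + κ ^ 2)) ((x₁ - κ * x₂) / √(1 + κ ^ 2)))
      (by rw [mp.map_eq]; exact hBi.aestronglyMeasurable)
    rw [mp.map_eq] at this
    exact this.symm
  have key : ∀ u : ℝ × ℝ, Complex.exp (-Real.pi * ((u.1 : ℂ) - Complex.I * x₁) ^ 2 -
        Real.pi * ((u.2 : ℂ) - Complex.I * x₂) ^ 2 -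
        2 * Real.pi * Complex.I *
          (x₁ * ((u.1 : ℂ) - Complex.I * x₁) + x₂ * ((u.2 : ℂ) - Complex.I * x₂))) /
      (((u.2 : ℂ) - Complex.I * x₂) *
        (((u.1 : ℂ) - Complex.I * x₁) - κ * ((u.2 : ℂ) - Complex.I * x₂))) =
      Real.pi * (Eich.P x₁ x₂ u + (Eich.P ((x₂ + κ * x₁) / √(1 + κ ^ 2)) ((x₁ - κ * x₂) / √(1 + κ ^ 2)) ∘
      (fun u : ℝ × ℝ => (((u.2 + κ * u.1) / √(1 + κ ^ 2), (u.1 - κ * u.2) / √(1 + κ ^ 2)) : ℝ × ℝ))) u) := by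
    rintro ⟨u, w⟩
    have hR : 0 < u ^ 2 + x₁ ^ 2 + (w ^ 2 + x₂ ^ 2) := by positivity
    have hR2 : ((w + κ * u) / √(1 + κ ^ 2)) ^ 2 + ((x₂ + κ * x₁) / √(1 + κ ^ 2)) ^ 2 +
        (((u - κ * w) / √(1 + κ ^ 2)) ^ 2 + ((x₁ - κ * x₂) / √(1 + κ ^ 2)) ^ 2) =
        u ^ 2 + x₁ ^ 2 + (w ^ 2 + x₂ ^ 2) := by
      simp only [div_pow, hcc]; field_simp; ring
    have hexp : Complex.exp (-Real.pi * ((u : ℂ) - Complex.I * x₁) ^ 2 -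
        Real.pi * ((w : ℂ) - Complex.I * x₂) ^ 2 -
        2 * Real.pi * Complex.I *
          (x₁ * ((u : ℂ) - Complex.I * x₁) + x₂ * ((w : ℂ) - Complex.I * x₂))) =
        ((Real.exp (-(Real.pi * (u ^ 2 + x₁ ^ 2 + (w ^ 2 + x₂ ^ 2)))) : ℝ) : ℂ) := by
      rw [Complex.ofReal_exp]
      congr 1
      push_cast
      linear_combination (Real.pi * (x₁ ^ 2 + x₂ ^ 2) : ℂ) * I_mul_I
    have d1 := Eich.den_ne w x₂ hx₂
    have d2 := Eich.den_ne (u - κ * w) (x₁ - κ * x₂) hx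
    have hc0 : ((√(1 + κ ^ 2) : ℝ) : ℂ) ≠ 0 := by exact_mod_cast hcp.ne'
    have q : ((((w + κ * u) / √(1 + κ ^ 2) : ℝ) : ℂ) + I * (((x₂ + κ * x₁) / √(1 + κ ^ 2) : ℝ) : ℂ)) /
        ((((u - κ * w) / √(1 + κ ^ 2) : ℝ) : ℂ) - I * (((x₁ - κ * x₂) / √(1 + κ ^ 2) : ℝ) : ℂ)) =
        ((w + κ * u : ℂ) + I * (x₂ + κ * x₁)) / (((u - κ * w : ℝ) : ℂ) - I * ((x₁ - κ * x₂ : ℝ) : ℂ)) := by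
      have n : ((((w + κ * u) / √(1 + κ ^ 2) : ℝ) : ℂ) + I * (((x₂ + κ * x₁) / √(1 + κ ^ 2) : ℝ) : ℂ)) =
        ((w + κ * u : ℂ) + I * (x₂ + κ * x₁)) / ((√(1 + κ ^ 2) : ℝ) : ℂ) := by push_cast; ring
      have m : ((((u - κ * w) / √(1 + κ ^ 2) : ℝ) : ℂ) - I * (((x₁ - κ * x₂) / √(1 + κ ^ 2) : ℝ) : ℂ)) =
        (((u - κ * w : ℝ) : ℂ) - I * ((x₁ - κ * x₂ : ℝ) : ℂ)) / ((√(1 + κ ^ 2) : ℝ) : ℂ) := by push_cast; ring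
      rw [n, m, div_div_div_cancel_right₀ hc0]
    simp only [Function.comp, Eich.P]
    rw [hR2, hexp, q, ← add_mul]
    have hd : (((u : ℂ) - Complex.I * x₁) - κ * ((w : ℂ) - Complex.I * x₂)) =
        (((u - κ * w : ℝ) : ℂ) - I * ((x₁ - κ * x₂ : ℝ) : ℂ)) := by push_cast; ring
    rw [hd]
    have hfrac : ((u : ℂ) + I * x₁) / ((w : ℂ) - I * x₂) +
        ((w + κ * u : ℂ) + I * (x₂ + κ * x₁)) / (((u - κ * w : ℝ) : ℂ) - I * ((x₁ - κ * x₂ : ℝ) : ℂ)) =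
        ((u ^ 2 + x₁ ^ 2 + (w ^ 2 + x₂ ^ 2) : ℝ) : ℂ) /
          (((w : ℂ) - I * x₂) * (((u - κ * w : ℝ) : ℂ) - I * ((x₁ - κ * x₂ : ℝ) : ℂ))) := by
      rw [div_add_div _ _ d1 d2]
      congr 1
      push_cast
      linear_combination (-(x₁ ^ 2 + x₂ ^ 2) : ℂ) * I_mul_I
    rw [hfrac]
    have hRc : ((u ^ 2 + x₁ ^ 2 + (w ^ 2 + x₂ ^ 2) : ℝ) : ℂ) ≠ 0 := by exact_mod_cast hR.ne'
    have hpc : (Real.pi : ℂ) ≠ 0 := by exact_mod_cast Real.pi_ne_zero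
    rw [Complex.ofReal_div, Complex.ofReal_mul Real.pi]
    field_simp
  unfold M2
  rw [integral_congr_ae (Filter.Eventually.of_forall key), integral_const_mul,
    integral_add (Eich.P_int x₁ x₂ hx₂) hBi', hB', hA, hB]
  have hpc : (Real.pi : ℂ) ≠ 0 := by exact_mod_cast Real.pi_ne_zero
  have hk : ((x₂ + κ * x₁) / √(1 + κ ^ 2)) * ((x₁ - κ * x₂) / √(1 + κ ^ 2)) =
      (x₂ + κ * x₁) * (x₁ - κ * x₂) / (1 + κ ^ 2) := by
    rw [div_mul_div_comm, ← sq, hcc]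
  have r1 : Real.pi * x₁ * x₂ * Eich.D x₁ x₂ = Real.pi * (x₁ * x₂ * Eich.D x₁ x₂) := by ring
  generalize Eich.D x₁ x₂ = D1
  generalize Eich.D ((x₂ + κ * x₁) / √(1 + κ ^ 2)) ((x₁ - κ * x₂) / √(1 + κ ^ 2)) = D2
  have r2 : Real.pi * ((x₂ + κ * x₁) / √(1 + κ ^ 2)) * ((x₁ - κ * x₂) / √(1 + κ ^ 2)) * D2 =
      Real.pi * ((x₂ + κ * x₁) * (x₁ - κ * x₂) / (1 + κ ^ 2)) * D2 := by
    rw [← hk]; ring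
  rw [r2]
  have hkc : ((1 : ℂ) + (κ : ℂ) ^ 2) ≠ 0 := by exact_mod_cast h0.ne'
  have hvc : (τ.im : ℂ) ≠ 0 := by exact_mod_cast hτ.ne'
  push_cast
  field_simp
  try ring
end

section
/- For all w₁, w₂ in the upper half-plane, Σ_{α∈𝒮} ε(α) Σ_{n∈ℤ²+α} (σ₁n₁+σ₂n₂)·n₂ · e^{(2πiK/σ₁)(σ₁n₁+σ₂n₂)² w₁ + (2πiDK/σ₁) n₂² w₂} = (1/K²) Σ_{B∈𝓑} ε((B₁−σ₂B₂)/(σ₁K), B₂/K) · (Σ_{m≡B₁ (mod σ₁K)} m e^{2πi m² w₁/(σ₁K)}) · (Σ_{m≡B₂ (mod σ₁K)} m e^{2πi D m² w₂/(σ₁K)}), where the sums over m run over all integers in the given residue class. -/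
open Complex

open Classical in
/-- The finite set `𝓑` of pairs `B` with `0 ≤ B₁,B₂ < σ₁K`, `B₁ ≡ σ₁A₁+σ₂A₂+ϱσ₂K (mod σ₁K)`
and `B₂ = A₂+ϱK` for some `A = Kα`, `α ∈ 𝒮`, `ϱ ∈ {0,…,σ₁−1}`. -/
noncomputable def Bset (S : Finset (ℚ × ℚ)) (K : ℕ) (σ₁ σ₂ : ℤ) : Finset (ℤ × ℤ) :=
  (Finset.Ico (0 : ℤ) (σ₁ * K) ×ˢ Finset.Ico (0 : ℤ) (σ₁ * K)).filter
    (fun B => ∃ α ∈ S, ∃ ϱ ∈ Finset.Ico (0 : ℤ) σ₁,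
      (∃ m : ℤ, (B.1 : ℚ) =
        (σ₁ : ℚ) * ((K : ℚ) * α.1) + (σ₂ : ℚ) * ((K : ℚ) * α.2) + (ϱ : ℚ) * σ₂ * K +
          (m : ℚ) * ((σ₁ : ℚ) * K)) ∧
      (B.2 : ℚ) = (K : ℚ) * α.2 + (ϱ : ℚ) * K)

/-- The weight `3/2` theta function `Σ_{m ≡ r (mod M)} m e^{2πiDm²w/M}`. -/
noncomputable def thetaShim (D M r : ℤ) (w : ℂ) : ℂ :=
  ∑' m : ℤ, if M ∣ (m - r) then
    (m : ℂ) * Complex.exp (2 * Real.pi * Complex.I * (D : ℂ) * (m : ℂ) ^ 2 * w / (M : ℂ))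
  else 0

lemma aux_summable (D M : ℤ) (hD : 0 < D) (hM : 0 < M) (w : ℂ) (hw : 0 < w.im) :
    Summable fun m : ℤ => (m : ℂ) *
      Complex.exp (2 * Real.pi * Complex.I * (D : ℂ) * (m : ℂ) ^ 2 * w / (M : ℂ)) := by
  have hDR : (0 : ℝ) < (D : ℝ) := by exact_mod_cast hD
  have hMR : (0 : ℝ) < (M : ℝ) := by exact_mod_cast hM
  have him : 0 < (((2 * (D : ℝ) / (M : ℝ) : ℝ) : ℂ) * w).im := by
    rw [Complex.im_ofReal_mul]; positivity
  have h := (summable_jacobiTheta₂'_term_iff 0 (((2 * (D : ℝ) / (M : ℝ) : ℝ) : ℂ) * w)).2 him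
  have h2 := h.mul_left (1 / (2 * Real.pi * Complex.I : ℂ))
  refine h2.congr fun m => ?_
  have hne : (2 * Real.pi * Complex.I : ℂ) ≠ 0 := Complex.two_pi_I_ne_zero
  unfold jacobiTheta₂'_term jacobiTheta₂_term
  rw [← mul_assoc, ← mul_assoc, one_div, inv_mul_cancel₀ hne, one_mul]
  congr 2
  push_cast
  ring

lemma aux_prod (f g : ℤ → ℂ) (hf : Summable f) (hg : Summable g) (p q : ℤ → Prop)
    [DecidablePred p] [DecidablePred q] :
    (Summable fun x : ℤ × ℤ => if p x.1 ∧ q x.2 then f x.1 * g x.2 else 0) ∧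
    (∑' m, if p m then f m else 0) * (∑' m, if q m then g m else 0) =
      ∑' x : ℤ × ℤ, if p x.1 ∧ q x.2 then f x.1 * g x.2 else 0 := by
  have hf' : Summable fun m => ‖if p m then f m else 0‖ :=
    (hf.indicator {m | p m}).norm.congr fun m => by by_cases h : p m <;> simp [Set.indicator, h]
  have hg' : Summable fun m => ‖if q m then g m else 0‖ :=
    (hg.indicator {m | q m}).norm.congr fun m => by by_cases h : q m <;> simp [Set.indicator, h]
  have e : ∀ x : ℤ × ℤ, (if p x.1 then f x.1 else 0) * (if q x.2 then g x.2 else 0) =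
      if p x.1 ∧ q x.2 then f x.1 * g x.2 else 0 := by
    intro x
    by_cases h1 : p x.1 <;> by_cases h2 : q x.2 <;> simp [h1, h2]
  constructor
  · exact (summable_mul_of_summable_norm hf' hg').congr e
  · rw [tsum_mul_tsum_of_summable_norm hf' hg']
    exact tsum_congr e

theorem theta_decomposition
    (S : Finset (ℚ × ℚ))
    (hS01 : ∀ α ∈ S, α.1 ∈ Set.Ioo (0 : ℚ) 1 ∧ α.2 ∈ Set.Ioo (0 : ℚ) 1)
    (hSsym : ∀ α ∈ S, (1 - α.1, 1 - α.2) ∈ S ∧ (1 - α.1, α.2) ∈ S ∧ (α.1, 1 - α.2) ∈ S)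
    (ε : ℚ × ℚ → ℝ)
    (hε : ∀ α ∈ S, ε (1 - α.1, 1 - α.2) = ε α ∧ ε (1 - α.1, α.2) = ε α)
    (hεper : ∀ (α : ℚ × ℚ) (n : ℤ × ℤ), ε (α.1 + n.1, α.2 + n.2) = ε α)
    (K : ℕ) (hK : 0 < K)
    (hKS : ∀ α ∈ S, ∃ z : ℤ × ℤ, (K : ℚ) * α.1 = z.1 ∧ (K : ℚ) * α.2 = z.2)
    (σ₁ σ₂ σ₃ : ℤ) (hσ₁ : 0 < σ₁) (hD : 0 < σ₁ * σ₃ - σ₂ ^ 2)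
    (w₁ w₂ : ℂ) (hw₁ : 0 < w₁.im) (hw₂ : 0 < w₂.im) :
    (∑ α ∈ S, (ε α : ℂ) *
      ∑' n : ℤ × ℤ,
        (((σ₁ * ((n.1 : ℚ) + α.1) + σ₂ * ((n.2 : ℚ) + α.2)) * ((n.2 : ℚ) + α.2) : ℚ) : ℂ) *
          Complex.exp (2 * Real.pi * Complex.I * (K : ℂ) / (σ₁ : ℂ) *
              (((σ₁ * ((n.1 : ℚ) + α.1) + σ₂ * ((n.2 : ℚ) + α.2)) ^ 2 : ℚ) : ℂ) * w₁ +
            2 * Real.pi * Complex.I * ((σ₁ * σ₃ - σ₂ ^ 2 : ℤ) : ℂ) * (K : ℂ) / (σ₁ : ℂ) *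
              ((((n.2 : ℚ) + α.2) ^ 2 : ℚ) : ℂ) * w₂)) =
      (1 / (K : ℂ) ^ 2) * ∑ B ∈ Bset S K σ₁ σ₂,
        (ε (((B.1 : ℚ) - (σ₂ : ℚ) * (B.2 : ℚ)) / ((σ₁ : ℚ) * K), (B.2 : ℚ) / K) : ℂ) *
          (thetaShim 1 (σ₁ * K) B.1 w₁ * thetaShim (σ₁ * σ₃ - σ₂ ^ 2) (σ₁ * K) B.2 w₂) := by
  classical
  have hKQ : (0 : ℚ) < K := by exact_mod_cast hK
  have hKZ : (0 : ℤ) < K := by exact_mod_cast hK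
  have hKC : (K : ℂ) ≠ 0 := by exact_mod_cast hK.ne'
  have hσC : (σ₁ : ℂ) ≠ 0 := by exact_mod_cast hσ₁.ne'
  have hσQ : (σ₁ : ℚ) ≠ 0 := by exact_mod_cast hσ₁.ne'
  have hM : 0 < σ₁ * (K : ℤ) := mul_pos hσ₁ hKZ
  set D : ℤ := σ₁ * σ₃ - σ₂ ^ 2 with hDdef
  let f : ℤ → ℂ := fun m => (m : ℂ) * Complex.exp (2 * Real.pi * Complex.I * ((1 : ℤ) : ℂ) * (m : ℂ) ^ 2 * w₁ / ((σ₁ * K : ℤ) : ℂ))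
  let g : ℤ → ℂ := fun m => (m : ℂ) * Complex.exp (2 * Real.pi * Complex.I * (D : ℂ) * (m : ℂ) ^ 2 * w₂ / ((σ₁ * K : ℤ) : ℂ))
  have hf : Summable f := aux_summable 1 (σ₁ * K) one_pos hM w₁ hw₁
  have hg : Summable g := aux_summable D (σ₁ * K) hD hM w₂ hw₂
  have hfg : Summable fun x : ℤ × ℤ => f x.1 * g x.2 := by
    have := (aux_prod f g hf hg (fun _ => True) (fun _ => True)).1
    simpa using this
  choose! z hz1 hz2 using hKS
  let φ : ℚ × ℚ → ℤ × ℤ → ℤ × ℤ := fun α n =>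
    (σ₁ * (K * n.1 + (z α).1) + σ₂ * (K * n.2 + (z α).2), K * n.2 + (z α).2)
  have hφinj : ∀ α, Function.Injective (φ α) := by
    intro α a b hab
    simp only [φ, Prod.mk.injEq] at hab
    obtain ⟨h1, h2⟩ := hab
    have h2' : a.2 = b.2 := by
      have : (K : ℤ) * a.2 = K * b.2 := by linarith
      exact mul_left_cancel₀ hKZ.ne' this
    rw [h2'] at h1
    have h1' : a.1 = b.1 := by
      have : σ₁ * ((K : ℤ) * a.1) = σ₁ * (K * b.1) := by linarith
      exact mul_left_cancel₀ hKZ.ne' (mul_left_cancel₀ hσ₁.ne' this)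
    exact Prod.ext h1' h2'
  -- left side
  have hL : ∀ α ∈ S, (∑' n : ℤ × ℤ,
        (((σ₁ * ((n.1 : ℚ) + α.1) + σ₂ * ((n.2 : ℚ) + α.2)) * ((n.2 : ℚ) + α.2) : ℚ) : ℂ) *
          Complex.exp (2 * Real.pi * Complex.I * (K : ℂ) / (σ₁ : ℂ) *
              (((σ₁ * ((n.1 : ℚ) + α.1) + σ₂ * ((n.2 : ℚ) + α.2)) ^ 2 : ℚ) : ℂ) * w₁ +
            2 * Real.pi * Complex.I * (D : ℂ) * (K : ℂ) / (σ₁ : ℂ) *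
              ((((n.2 : ℚ) + α.2) ^ 2 : ℚ) : ℂ) * w₂)) =
      ∑' x : ℤ × ℤ, (1 / (K : ℂ) ^ 2) * (if x ∈ Set.range (φ α) then f x.1 * g x.2 else 0) := by
    intro α hα
    have hsup : Function.support (fun x : ℤ × ℤ => (1 / (K : ℂ) ^ 2) *
        (if x ∈ Set.range (φ α) then f x.1 * g x.2 else 0)) ⊆ Set.range (φ α) := by
      intro x hx
      by_contra h
      apply hx
      simp only [h, if_false, mul_zero]
    rw [← (hφinj α).tsum_eq hsup]
    refine tsum_congr fun n => ?_
    rw [if_pos (Set.mem_range_self n)]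
    have e1 : (α.1 : ℂ) = ((z α).1 : ℂ) / K := by
      have : α.1 = ((z α).1 : ℚ) / K := by rw [← hz1 α hα]; field_simp
      rw [this]; push_cast; rfl
    have e2 : (α.2 : ℂ) = ((z α).2 : ℂ) / K := by
      have : α.2 = ((z α).2 : ℚ) / K := by rw [← hz2 α hα]; field_simp
      rw [this]; push_cast; rfl
    simp only [f, g, φ]
    rw [Complex.exp_add]
    push_cast
    rw [e1, e2]
    have E1 : 2 * (Real.pi : ℂ) * I * K / σ₁ * (σ₁ * (n.1 + (z α).1 / K) + σ₂ * (n.2 + (z α).2 / K)) ^ 2 * w₁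
      = 2 * (Real.pi : ℂ) * I * 1 * (σ₁ * (K * n.1 + (z α).1) + σ₂ * (K * n.2 + (z α).2)) ^ 2 * w₁ / (σ₁ * K) := by
      field_simp
    have E2 : 2 * (Real.pi : ℂ) * I * D * K / σ₁ * (n.2 + (z α).2 / K) ^ 2 * w₂
      = 2 * (Real.pi : ℂ) * I * D * (K * n.2 + (z α).2) ^ 2 * w₂ / (σ₁ * K) := by
      field_simp
    rw [E1, E2]
    generalize cexp _ = X
    generalize cexp _ = Y
    field_simp
  have hsumL : ∀ α ∈ S, Summable fun x : ℤ × ℤ => (ε α : ℂ) * ((1 / (K : ℂ) ^ 2) *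
      (if x ∈ Set.range (φ α) then f x.1 * g x.2 else 0)) := by
    intro α _
    refine Summable.mul_left _ (Summable.mul_left _ ?_)
    exact (hfg.indicator (Set.range (φ α))).congr fun x => by simp only [Set.indicator]
  have hR : ∀ B : ℤ × ℤ, thetaShim 1 (σ₁ * K) B.1 w₁ * thetaShim D (σ₁ * K) B.2 w₂ =
      ∑' x : ℤ × ℤ, if (σ₁ * K ∣ x.1 - B.1) ∧ (σ₁ * K ∣ x.2 - B.2) then f x.1 * g x.2 else 0 := by
    intro B
    exact (aux_prod f g hf hg (fun m => σ₁ * K ∣ m - B.1) (fun m => σ₁ * K ∣ m - B.2)).2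
  have hsumR : ∀ B ∈ Bset S K σ₁ σ₂, Summable fun x : ℤ × ℤ =>
      (ε (((B.1 : ℚ) - (σ₂ : ℚ) * (B.2 : ℚ)) / ((σ₁ : ℚ) * K), (B.2 : ℚ) / K) : ℂ) *
      if (σ₁ * K ∣ x.1 - B.1) ∧ (σ₁ * K ∣ x.2 - B.2) then f x.1 * g x.2 else 0 := by
    intro B _
    exact ((aux_prod f g hf hg (fun m => σ₁ * K ∣ m - B.1) (fun m => σ₁ * K ∣ m - B.2)).1).mul_left _
  rw [Finset.sum_congr rfl fun α hα => by rw [hL α hα, ← tsum_mul_left]]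
  rw [← Summable.tsum_finsetSum hsumL]
  rw [Finset.sum_congr rfl fun B hB => by rw [hR B, ← tsum_mul_left]]
  rw [← Summable.tsum_finsetSum hsumR, ← tsum_mul_left]
  refine tsum_congr fun x => ?_
  -- pointwise identity
  -- membership characterisation
  have hmem : ∀ α ∈ S, x ∈ Set.range (φ α) → (x.1 % (σ₁ * K), x.2 % (σ₁ * K)) ∈ Bset S K σ₁ σ₂ ∧
      ε ((((x.1 % (σ₁ * K) : ℤ) : ℚ) - (σ₂ : ℚ) * ((x.2 % (σ₁ * K) : ℤ) : ℚ)) / ((σ₁ : ℚ) * K), ((x.2 % (σ₁ * K) : ℤ) : ℚ) / K) = ε α := by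
    rintro α hα ⟨n, rfl⟩
    have q1 := Int.emod_add_mul_ediv (φ α n).1 (σ₁ * K)
    have q2 := Int.emod_add_mul_ediv (φ α n).2 (σ₁ * K)
    have r1 := Int.emod_nonneg (φ α n).1 hM.ne'
    have r2 := Int.emod_nonneg (φ α n).2 hM.ne'
    have s1 := Int.emod_lt_of_pos (φ α n).1 hM
    have s2 := Int.emod_lt_of_pos (φ α n).2 hM
    generalize (φ α n).1 % (σ₁ * K) = b1 at *
    generalize (φ α n).2 % (σ₁ * K) = b2 at *
    generalize (φ α n).1 / (σ₁ * K) = k1 at *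
    generalize (φ α n).2 / (σ₁ * K) = k2 at *
    simp only [φ] at q1 q2
    have hz1' := hz1 α hα
    have hz2' := hz2 α hα
    have hzpos : 0 < (z α).2 := by
      have : (0 : ℚ) < ((z α).2 : ℚ) := by rw [← hz2']; exact mul_pos hKQ (hS01 α hα).2.1
      exact_mod_cast this
    have hzlt : (z α).2 < K := by
      have : ((z α).2 : ℚ) < (K : ℚ) := by
        rw [← hz2']; have := (hS01 α hα).2.2; nlinarith
      exact_mod_cast this
    have hb2 : b2 = (z α).2 + (n.2 - σ₁ * k2) * K := by linarith
    have hb1 : b1 = σ₁ * (z α).1 + σ₂ * b2 + (n.1 + σ₂ * k2 - k1) * (σ₁ * K) := by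
      rw [hb2]; linarith
    have hb2Q : (b2 : ℚ) = K * α.2 + ((n.2 - σ₁ * k2 : ℤ) : ℚ) * K := by
      rw [hz2', hb2]; push_cast; ring
    have hb1Q : (b1 : ℚ) = σ₁ * (K * α.1) + σ₂ * b2 + ((n.1 + σ₂ * k2 - k1 : ℤ) : ℚ) * (σ₁ * K) := by
      rw [hz1', hb1]; push_cast; ring
    constructor
    · simp only [Bset, Finset.mem_filter, Finset.mem_product, Finset.mem_Ico]
      refine ⟨⟨⟨r1, s1⟩, r2, s2⟩, α, hα, n.2 - σ₁ * k2, ⟨?_, ?_⟩, ⟨n.1 + σ₂ * k2 - k1, ?_⟩, hb2Q⟩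
      · by_contra h
        have : n.2 - σ₁ * k2 ≤ -1 := by linarith
        nlinarith
      · by_contra h
        have : σ₁ ≤ n.2 - σ₁ * k2 := by linarith
        nlinarith
      · rw [hb1Q, hb2Q]; ring
    · rw [← hεper α (n.1 + σ₂ * k2 - k1, n.2 - σ₁ * k2)]
      congr 2
      · rw [hb1Q]; field_simp; ring
      · rw [hb2Q]; field_simp
  have hmem' : (x.1 % (σ₁ * K), x.2 % (σ₁ * K)) ∈ Bset S K σ₁ σ₂ → ∃ α ∈ S, x ∈ Set.range (φ α) := by
    intro h
    simp only [Bset, Finset.mem_filter] at h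
    obtain ⟨_, α, hα, ϱ, _, ⟨m, h1⟩, h2⟩ := h
    refine ⟨α, hα, ?_⟩
    have q1 := Int.emod_add_mul_ediv x.1 (σ₁ * K)
    have q2 := Int.emod_add_mul_ediv x.2 (σ₁ * K)
    generalize x.1 % (σ₁ * K) = b1 at *
    generalize x.2 % (σ₁ * K) = b2 at *
    generalize x.1 / (σ₁ * K) = k1 at *
    generalize x.2 / (σ₁ * K) = k2 at *
    rw [hz1 α hα, hz2 α hα] at h1
    rw [hz2 α hα] at h2
    norm_cast at h1 h2
    refine ⟨(m + k1 - σ₂ * k2, ϱ + σ₁ * k2), ?_⟩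
    simp only [φ]
    refine Prod.ext ?_ ?_
    · simp only
      rw [← q1, h1]; ring
    · simp only
      rw [← q2, h2]; ring
  have huniq : ∀ α ∈ S, ∀ β ∈ S, x ∈ Set.range (φ α) → x ∈ Set.range (φ β) → α = β := by
    rintro α hα β hβ ⟨n, hn⟩ ⟨k, hk⟩
    rw [← hk] at hn
    simp only [φ, Prod.mk.injEq] at hn
    obtain ⟨h1, h2⟩ := hn
    rw [h2] at h1
    have h1' : (K : ℤ) * n.1 + (z α).1 = K * k.1 + (z β).1 :=
      mul_left_cancel₀ hσ₁.ne' (add_right_cancel h1)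
    have key : ∀ (a b : ℚ) (u v s t : ℤ), a ∈ Set.Ioo (0 : ℚ) 1 → b ∈ Set.Ioo (0 : ℚ) 1 →
        (K : ℚ) * a = s → (K : ℚ) * b = t → (K : ℤ) * u + s = K * v + t → a = b := by
      intro a b u v s t ha hb hs ht h
      have hQ : (K : ℚ) * u + s = K * v + t := by exact_mod_cast h
      rw [← hs, ← ht, ← mul_add, ← mul_add] at hQ
      have hQ' := mul_left_cancel₀ hKQ.ne' hQ
      have l1 : ((u - v : ℤ) : ℚ) < 1 := by push_cast; linarith [ha.1, hb.2]
      have l2 : (-1 : ℚ) < ((u - v : ℤ) : ℚ) := by push_cast; linarith [ha.2, hb.1]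
      have l1' : u - v < 1 := by exact_mod_cast l1
      have l2' : -1 < u - v := by exact_mod_cast l2
      have : u = v := by omega
      rw [this] at hQ'
      exact add_left_cancel hQ'
    exact Prod.ext (key _ _ _ _ _ _ (hS01 α hα).1 (hS01 β hβ).1 (hz1 α hα) (hz1 β hβ) h1')
      (key _ _ _ _ _ _ (hS01 α hα).2 (hS01 β hβ).2 (hz2 α hα) (hz2 β hβ) h2)
  have hBuniq : ∀ B ∈ Bset S K σ₁ σ₂, (σ₁ * K ∣ x.1 - B.1) ∧ (σ₁ * K ∣ x.2 - B.2) →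
      B = (x.1 % (σ₁ * K), x.2 % (σ₁ * K)) := by
    rintro B hB ⟨d1, d2⟩
    simp only [Bset, Finset.mem_filter, Finset.mem_product, Finset.mem_Ico] at hB
    obtain ⟨⟨⟨a1, a2⟩, a3, a4⟩, _⟩ := hB
    refine Prod.ext ?_ ?_
    · exact ((Int.emod_emod_of_dvd x.1 (dvd_refl (σ₁ * (K : ℤ)))).symm.trans (by
        rw [Int.emod_emod_of_dvd _ dvd_rfl, Int.emod_eq_emod_iff_emod_sub_eq_zero.2 (Int.emod_eq_zero_of_dvd d1), Int.emod_eq_of_lt a1 a2])).symm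
    · exact ((Int.emod_emod_of_dvd x.2 (dvd_refl (σ₁ * (K : ℤ)))).symm.trans (by
        rw [Int.emod_emod_of_dvd _ dvd_rfl, Int.emod_eq_emod_iff_emod_sub_eq_zero.2 (Int.emod_eq_zero_of_dvd d2), Int.emod_eq_of_lt a3 a4])).symm
  by_cases hx : ∃ α ∈ S, x ∈ Set.range (φ α)
  · obtain ⟨α, hα, hxα⟩ := hx
    obtain ⟨hB, hεB⟩ := hmem α hα hxα
    rw [Finset.sum_eq_single_of_mem α hα, Finset.sum_eq_single_of_mem _ hB]
    · rw [if_pos hxα, if_pos ⟨Int.dvd_self_sub_emod, Int.dvd_self_sub_emod⟩]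
      simp only
      rw [hεB]
      ring
    · intro B hB' hne
      rw [if_neg fun h => hne (hBuniq B hB' h), mul_zero]
    · intro β hβ hne
      rw [if_neg fun h => hne (huniq β hβ α hα h hxα), mul_zero, mul_zero]
  · rw [Finset.sum_eq_zero, Finset.sum_eq_zero, mul_zero]
    · intro B hB
      rw [if_neg, mul_zero]
      intro h
      apply hx
      apply hmem'
      rw [← hBuniq B hB h]
      exact hB
    · intro α hα
      rw [if_neg fun h => hx ⟨α, hα, h⟩, mul_zero, mul_zero]
end

section
/- Let N and D be positive integers, h ∈ ℤ, and define f(τ) := Σ_{m≡h (mod N)} m e^{2πi D τ m²/N} for τ in the upper half-plane. Then for every γ = (a b; c d) ∈ SL₂(ℤ) with d > 0, a ≡ d ≡ 1 (mod 8ND) and b ≡ c ≡ 0 (mod 8ND), and every τ in the upper half-plane, (c/d)³ ε_d³ (cτ+d)^{−3/2} f((aτ+b)/(cτ+d)) = f(τ); that is, f is invariant under the weight-3/2 slash action of γ. -/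
open Complex

/-- `f(τ) = Σ_{m ≡ h (mod N)} m e^{2πiDτm²/N}`. -/
noncomputable def shimuraTheta (N D : ℕ) (h : ℤ) (τ : ℂ) : ℂ :=
  ∑' m : ℤ, if (N : ℤ) ∣ (m - h) then
    (m : ℂ) * Complex.exp (2 * Real.pi * Complex.I * (D : ℂ) * τ * (m : ℂ) ^ 2 / (N : ℂ))
  else 0


lemma cs_sq (x : ℂ) : (x ^ (1/2 : ℂ)) ^ 2 = x := by
  rw [← Complex.cpow_nat_mul]; norm_num

lemma cs_eq {p x : ℂ} (h : p ^ 2 = x) (hp : 0 < p.re) : x ^ (1/2 : ℂ) = p := by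
  have h2 := cs_sq x
  rw [← h]
  have := Complex.sq_cpow_two_inv hp
  rw [show (1/2:ℂ) = 2⁻¹ by norm_num]
  simpa using this

lemma cs_re {x : ℂ} (hx : x ∈ slitPlane) : 0 < (x ^ (1/2 : ℂ)).re := by
  have hx0 := slitPlane_ne_zero hx
  rw [Complex.cpow_def_of_ne_zero hx0, Complex.exp_re]
  apply mul_pos (Real.exp_pos _)
  apply Real.cos_pos_of_mem_Ioo
  have h1 := neg_pi_lt_arg x
  have h2 := arg_le_pi x
  have h3 : arg x ≠ Real.pi := (mem_slitPlane_iff_arg.1 hx).1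
  have h4 := lt_of_le_of_ne h2 h3
  have : (log x * (1/2)).im = arg x / 2 := by
    rw [show (1/2:ℂ) = ((1/2:ℝ):ℂ) by norm_num, Complex.im_mul_ofReal, log_im]; ring
  rw [this]
  constructor <;> linarith

lemma cs_im (x : ℂ) : 2 * (x ^ (1/2 : ℂ)).re * (x ^ (1/2 : ℂ)).im = x.im := by
  conv_rhs => rw [← cs_sq x, sq, mul_im]
  ring

lemma cs_mul {x y : ℂ} (hx : x ∈ slitPlane) (hy : y ∈ slitPlane)
    (h : 0 < x.im * y.im → 0 < (x * y).im * y.im) :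
    (x * y) ^ (1/2 : ℂ) = x ^ (1/2 : ℂ) * y ^ (1/2 : ℂ) := by
  apply cs_eq
  · rw [mul_pow, cs_sq, cs_sq]
  have a1 := cs_re hx
  have b1 := cs_re hy
  have a2 := cs_im x
  have b2 := cs_im y
  have ep : (x ^ (1/2 : ℂ) * y ^ (1/2 : ℂ)) ^ 2 = x * y := by rw [mul_pow, cs_sq, cs_sq]
  set s := x ^ (1/2 : ℂ)
  set t := y ^ (1/2 : ℂ)
  have e2 : 2 * (s * t).re * (s * t).im = (x * y).im := by
    rw [← ep, sq, mul_im (s*t)]; ring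
  rw [← a2, ← b2, ← e2] at h
  have hst : 0 < s.re * t.re := mul_pos a1 b1
  by_cases hc : 0 < s.im * t.im
  · have h' := h (by
      have := mul_pos (mul_pos hst hc) (show (0:ℝ) < 4 by norm_num)
      nlinarith)
    by_contra hn
    push Not at hn
    have : 0 < (s*t).im * t.im := by
      rw [mul_im]
      have : 0 < t.im ^ 2 := by
        have : t.im ≠ 0 := by intro h0; simp [h0] at hc
        positivity
      nlinarith [mul_pos b1 hc, mul_pos a1 this]
    have h6 := mul_nonneg (neg_nonneg.2 hn) (mul_pos this b1).le
    nlinarith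
  · rw [mul_re]; linarith

lemma cs_neg_pos {x : ℂ} (hx : 0 < x.im) : (-x) ^ (1/2 : ℂ) = -I * x ^ (1/2:ℂ) := by
  have h1 : x ∈ slitPlane := Or.inr hx.ne'
  have h2 := cs_re h1
  have h3 := cs_im x
  apply cs_eq
  · rw [mul_pow, cs_sq]; simp
  · simp
    simp at h2 h3
    rw [← h3] at hx
    by_contra hn
    nlinarith

lemma cs_neg_neg {x : ℂ} (hx : x.im < 0) : (-x) ^ (1/2 : ℂ) = I * x ^ (1/2:ℂ) := by
  have h1 : x ∈ slitPlane := Or.inr hx.ne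
  have h2 := cs_re h1
  have h3 := cs_im x
  apply cs_eq
  · rw [mul_pow, cs_sq]; simp
  · simp
    simp at h2 h3
    rw [← h3] at hx
    by_contra hn
    nlinarith

lemma cs_div {u v : ℂ} (hu : 0 < u.re) (hv : 0 < v.re) :
    (u / v) ^ (1/2 : ℂ) = u ^ (1/2 : ℂ) / v ^ (1/2 : ℂ) := by
  apply cs_eq
  · rw [div_pow, cs_sq, cs_sq]
  have key : ∀ w : ℂ, 0 < w.re → 0 < (w ^ (1/2 : ℂ)).re ∧ |(w ^ (1/2 : ℂ)).im| < (w ^ (1/2 : ℂ)).re := by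
    intro w hw
    have h1 := cs_re (Or.inl hw : w ∈ slitPlane)
    refine ⟨h1, ?_⟩
    have := cs_sq w
    set s := w ^ (1/2 : ℂ)
    rw [← this, sq, mul_re] at hw
    apply abs_lt_of_sq_lt_sq _ h1.le
    nlinarith
  obtain ⟨a1, a2⟩ := key u hu
  obtain ⟨b1, b2⟩ := key v hv
  set s := u ^ (1/2 : ℂ)
  set t := v ^ (1/2 : ℂ)
  have ht : 0 < normSq t := by
    rw [normSq_pos]; intro h; rw [h] at b1; simp at b1
  rw [div_re, ← add_div]
  apply div_pos _ ht
  have h1 : |s.im * t.im| < s.re * t.re := by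
    rw [abs_mul]; exact mul_lt_mul'' a2 b2 (abs_nonneg _) (abs_nonneg _)
  have := (abs_lt.1 h1).1
  linarith

lemma th_add (z σ : ℂ) (k : ℤ) : jacobiTheta₂ z (σ + 2 * k) = jacobiTheta₂ z σ := by
  induction k using Int.induction_on with
  | zero => simp
  | succ n ih => 
    rw [← ih, ← jacobiTheta₂_add_right z (σ + 2 * ((n : ℤ) : ℂ))]; push_cast; ring_nf
  | pred n ih => 
    rw [← ih, ← jacobiTheta₂_add_right z (σ + 2 * ((-(n:ℤ) - 1 : ℤ) : ℂ))]; push_cast; ring_nf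

lemma th_W (z σ : ℂ) (k : ℤ) (hσ : 0 < σ.im) :
    jacobiTheta₂ (z / (2 * k * σ + 1)) (σ / (2 * k * σ + 1)) =
      (2 * k * σ + 1) ^ (1/2 : ℂ) * cexp (Real.pi * I * (2 * k) * z ^ 2 / (2 * k * σ + 1))
        * jacobiTheta₂ z σ := by
  have hσ0 : σ ≠ 0 := by rintro rfl; simp at hσ
  have hy0 : 2 * k * σ + 1 ≠ 0 := by
    intro h
    have h1 := congrArg im h
    have h2 := congrArg re h
    simp at h1 h2
    rcases h1 with h1 | h1
    · subst h1; simp at h2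
    · linarith
  set y := 2 * k * σ + 1 with hy
  have him : 0 < (σ / y).im := by
    have : σ / y = (y / σ)⁻¹ := by field_simp
    rw [this, inv_im]
    have e : y / σ = 2 * k + σ⁻¹ := by rw [hy]; field_simp
    apply div_pos _ (normSq_pos.2 (div_ne_zero hy0 hσ0))
    rw [e]; simp [neg_div]
    exact div_pos hσ (normSq_pos.2 hσ0)
  have r1 : 0 < (-I * σ).re := by simpa using hσ
  have r2 : 0 < (-I * (σ/y)).re := by simpa using him
  have hs := cs_div r1 r2
  rw [show -I * σ / (-I * (σ/y)) = y by field_simp] at hs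
  rw [jacobiTheta₂_functional_equation (z/y), jacobiTheta₂_functional_equation z σ, hs]
  have e1 : z / y / (σ / y) = z / σ := by field_simp
  have e2 : -1 / (σ / y) = -1 / σ + 2 * ((-k : ℤ) : ℂ) := by push_cast; rw [hy]; field_simp; ring
  rw [e1, e2, th_add]
  have e3 : cexp (-Real.pi * I * (z / y) ^ 2 / (σ / y)) =
     cexp (Real.pi * I * (2 * k) * z ^ 2 / y) * cexp (-Real.pi * I * z ^ 2 / σ) := by
    rw [← Complex.exp_add]; congr 1; field_simp; rw [hy]; ring
  rw [e3]
  have n1 : (-I * σ) ^ (1/2 : ℂ) ≠ 0 := by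
    intro h; have := cs_re (Or.inl r1 : -I * σ ∈ slitPlane); rw [h] at this; simp at this
  field_simp

noncomputable def chiT (c : ℤ) (d : ℕ) : ℂ :=
  (jacobiSym (2 * c) d : ℂ) * (if d % 4 = 1 then 1 else -I)

lemma chiT_T {c : ℤ} {d d' : ℕ} (k : ℤ) (hc : Even c) (hd : Odd d) (hd' : Odd d')
    (h : (d : ℤ) = d' + 2 * k * c) : chiT c d = chiT c d' := by
  obtain ⟨e, rfl⟩ := hc
  have h4 : d % 4 = d' % 4 := by
    have : (d : ℤ) % 4 = d' % 4 := by
      rw [h, show (d':ℤ) + 2 * k * (e+e) = d' + 4 * (k * e) by ring]; omega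
    omega
  have key : ∀ n : ℕ, Odd n → jacobiSym (2 * (e + e)) n = jacobiSym e (n % (4 * e.natAbs)) := by
    intro n hn
    rw [← jacobiSym.mod_right e hn, show 2 * (e + e) = 4 * e by ring, jacobiSym.mul_left,
      jacobiSym.at_four hn, one_mul]
  have h5 : d % (4 * e.natAbs) = d' % (4 * e.natAbs) := by
    have : ((4 * e.natAbs : ℕ) : ℤ) ∣ (d' : ℤ) - d := by
      rw [h]; push_cast
      rw [show (d':ℤ) - (d' + 2 * k * (e+e)) = 4 * (e * (-k)) by ring]
      exact mul_dvd_mul_left 4 (Dvd.dvd.mul_right ((abs_dvd _ _).2 dvd_rfl) _)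
    exact (Nat.modEq_iff_dvd.2 this)
  rw [chiT, chiT, key d hd, key d' hd', h4, h5]

lemma chiT_W {c c' : ℤ} {d : ℕ} (k : ℤ) (h : c = c' + 2 * k * d) : chiT c d = chiT c' d := by
  rw [chiT, chiT]
  congr 2
  apply jacobiSym.mod_left'
  rw [h, show 2 * (c' + 2 * k * (d:ℤ)) = 2 * c' + d * (4 * k) by ring]
  simp

lemma jac_swap {d e : ℕ} (hd : Odd d) (he : Odd e) (h : (d + e) % 4 = 0) :
    jacobiSym e d = jacobiSym d e := by
  rw [Nat.odd_iff] at hd he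
  have : d % 4 = 1 ∨ e % 4 = 1 := by omega
  rcases this with h1 | h1
  · exact (jacobiSym.quadratic_reciprocity_one_mod_four h1 (Nat.odd_iff.2 he)).symm
  · exact (jacobiSym.quadratic_reciprocity_one_mod_four h1 (Nat.odd_iff.2 hd))

lemma jac_neg {d : ℕ} (x : ℤ) (hd : Odd d) :
    jacobiSym (-x) d = (if d % 4 = 1 then 1 else -1) * jacobiSym x d := by
  rw [jacobiSym.neg _ hd]
  congr 1
  rw [Nat.odd_iff] at hd
  split_ifs with h
  · exact ZMod.χ₄_nat_one_mod_four h
  · exact ZMod.χ₄_nat_three_mod_four (by omega)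

lemma chiT_neg_pos {c : ℤ} {d e : ℕ} (hc : Even c) (hd : Odd d) (he : Odd e)
    (h : (d : ℤ) + e = 2 * c) : chiT c d = -I * chiT (-c) e := by
  obtain ⟨x, rfl⟩ := hc
  have h4 : (d + e) % 4 = 0 := by omega
  rw [chiT, chiT, ← h, show 2 * -(x + x) = -((d:ℤ) + e) by rw [h]; ring, jac_neg _ he,
    jacobiSym.mod_left' (show ((d:ℤ) + e) % d = e % d by simp),
    jacobiSym.mod_left' (show ((d:ℤ) + e) % e = d % e by simp), jac_swap hd he h4]
  rw [Nat.odd_iff] at hd he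
  by_cases h1 : d % 4 = 1
  · have h2 : ¬ e % 4 = 1 := by omega
    simp only [h1, h2, if_true, if_false]
    push_cast
    linear_combination ((jacobiSym d e : ℂ)) * I_mul_I
  · have h2 : e % 4 = 1 := by omega
    simp only [h1, h2, if_true, if_false]
    push_cast
    ring

lemma chiT_neg_neg {c : ℤ} {d e : ℕ} (hc : Even c) (hd : Odd d) (he : Odd e)
    (h : (d : ℤ) + e = -2 * c) : chiT c d = I * chiT (-c) e := by
  obtain ⟨x, rfl⟩ := hc
  have h4 : (d + e) % 4 = 0 := by omega
  rw [chiT, chiT, show 2 * -(x + x) = ((d:ℤ) + e) by rw [h]; ring,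
    show 2 * (x + x) = -((d:ℤ) + e) by rw [h]; ring, jac_neg _ hd,
    jacobiSym.mod_left' (show ((d:ℤ) + e) % d = e % d by simp),
    jacobiSym.mod_left' (show ((d:ℤ) + e) % e = d % e by simp), jac_swap hd he h4]
  rw [Nat.odd_iff] at hd he
  by_cases h1 : d % 4 = 1
  · have h2 : ¬ e % 4 = 1 := by omega
    simp only [h1, h2, if_true, if_false]
    push_cast
    linear_combination ((jacobiSym d e : ℂ)) * I_mul_I
  · have h2 : e % 4 = 1 := by omega
    simp only [h1, h2, if_true, if_false]
    push_cast
    ring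

def ThLaw (a b c : ℤ) (d : ℕ) : Prop := ∀ z σ : ℂ, 0 < σ.im →
  jacobiTheta₂ (z / (c * σ + d)) ((a * σ + b) / (c * σ + d)) =
    chiT c d * (c * σ + d) ^ (1/2 : ℂ) * cexp (Real.pi * I * c * z ^ 2 / (c * σ + d)) *
      jacobiTheta₂ z σ

lemma cd_slit {c : ℤ} {d : ℕ} (hd : 0 < d) {σ : ℂ} (hσ : 0 < σ.im) :
    (c * σ + d : ℂ) ∈ slitPlane := by
  by_cases hc : c = 0
  · left; subst hc; simpa using hd
  · right; simp; exact ⟨hc, hσ.ne'⟩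

lemma law_T {a b b' c : ℤ} {d d' : ℕ} (k : ℤ) (hc : Even c) (hd : Odd d) (hd' : Odd d')
    (h : (d : ℤ) = d' + 2 * k * c) (hb : b = b' + 2 * k * a) (H : ThLaw a b' c d') :
    ThLaw a b c d := by
  intro z σ hσ
  have H1 := H z (σ + 2 * k) (by simpa using hσ)
  rw [th_add] at H1
  have hC : (d : ℂ) = d' + 2 * k * c := by exact_mod_cast congrArg (Int.cast : ℤ → ℂ) h
  have e1 : (c : ℂ) * (σ + 2 * k) + d' = c * σ + d := by rw [hC]; ring
  have e2 : (a : ℂ) * (σ + 2 * k) + b' = a * σ + b := by rw [hb]; push_cast; ring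
  rw [e1, e2] at H1
  rw [H1, chiT_T k hc hd hd' h]

lemma law_neg_pos {a b b' c : ℤ} {d e : ℕ} (hc : Even c) (hd : Odd d) (he : Odd e) (hc0 : 0 < c)
    (h : (d : ℤ) + e = 2 * c) (hb : b = -b' + 2 * a) (H : ThLaw (-a) b' (-c) e) :
    ThLaw a b c d := by
  intro z σ hσ
  have H1 := H (-z) (σ + 2 * ((-1 : ℤ) : ℂ) + 4) (by simpa using hσ)
  have hC : (d : ℂ) = 2 * c - e := by
    rw [eq_sub_iff_add_eq]; exact_mod_cast congrArg (Int.cast : ℤ → ℂ) h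
  have e0 : σ + 2 * ((-1 : ℤ) : ℂ) + 4 = σ + 2 * ((1 : ℤ) : ℂ) := by push_cast; ring
  rw [e0, th_add, jacobiTheta₂_neg_left] at H1
  have e1 : ((-c : ℤ) : ℂ) * (σ + 2 * ((1:ℤ):ℂ)) + e = -(c * σ + d) := by rw [hC]; push_cast; ring
  have e2 : ((-a : ℤ) : ℂ) * (σ + 2 * ((1:ℤ):ℂ)) + b' = -(a * σ + b) := by rw [hb]; push_cast; ring
  rw [e1, e2, neg_div_neg_eq, neg_div_neg_eq, cs_neg_pos (by simp; positivity)] at H1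
  rw [H1, chiT_neg_pos hc hd he h]
  have e3 : Real.pi * I * ((-c : ℤ) : ℂ) * (-z) ^ 2 / -(c * σ + d) =
      Real.pi * I * c * z ^ 2 / (c * σ + d) := by
    rw [← neg_div_neg_eq]; push_cast; ring
  rw [e3]; ring

lemma law_neg_neg {a b b' c : ℤ} {d e : ℕ} (hc : Even c) (hd : Odd d) (he : Odd e) (hc0 : c < 0)
    (h : (d : ℤ) + e = -2 * c) (hb : b = -b' - 2 * a) (H : ThLaw (-a) b' (-c) e) :
    ThLaw a b c d := by
  intro z σ hσ
  have H1 := H (-z) (σ + 2 * ((-1 : ℤ) : ℂ)) (by simpa using hσ)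
  have hC : (d : ℂ) = -2 * c - e := by
    rw [eq_sub_iff_add_eq]; exact_mod_cast congrArg (Int.cast : ℤ → ℂ) h
  rw [th_add, jacobiTheta₂_neg_left] at H1
  have e1 : ((-c : ℤ) : ℂ) * (σ + 2 * ((-1:ℤ):ℂ)) + e = -(c * σ + d) := by rw [hC]; push_cast; ring
  have e2 : ((-a : ℤ) : ℂ) * (σ + 2 * ((-1:ℤ):ℂ)) + b' = -(a * σ + b) := by rw [hb]; push_cast; ring
  have hc0' : (c : ℝ) < 0 := by exact_mod_cast hc0
  rw [e1, e2, neg_div_neg_eq, neg_div_neg_eq, cs_neg_neg (by simp; nlinarith)] at H1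
  rw [H1, chiT_neg_neg hc hd he h]
  have e3 : Real.pi * I * ((-c : ℤ) : ℂ) * (-z) ^ 2 / -(c * σ + d) =
      Real.pi * I * c * z ^ 2 / (c * σ + d) := by
    rw [← neg_div_neg_eq]; push_cast; ring
  rw [e3]; ring

lemma w_im {σ : ℂ} (k : ℤ) (hσ : 0 < σ.im) : 2 * k * σ + 1 ≠ 0 ∧ 0 < (σ / (2 * k * σ + 1)).im := by
  have hσ0 : σ ≠ 0 := by rintro rfl; simp at hσ
  have hy0 : 2 * k * σ + 1 ≠ 0 := by
    intro h
    have h1 := congrArg im h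
    have h2 := congrArg re h
    simp at h1 h2
    rcases h1 with h1 | h1
    · subst h1; simp at h2
    · linarith
  refine ⟨hy0, ?_⟩
  set y := 2 * k * σ + 1 with hy
  have : σ / y = (y / σ)⁻¹ := by field_simp
  rw [this, inv_im]
  have e : y / σ = 2 * k + σ⁻¹ := by rw [hy]; field_simp
  apply div_pos _ (normSq_pos.2 (div_ne_zero hy0 hσ0))
  rw [e]; simp [neg_div]
  exact div_pos hσ (normSq_pos.2 hσ0)

lemma law_W {a a' b c c' : ℤ} {d : ℕ} (k : ℤ) (hd : 0 < d)
    (h : c = c' + 2 * k * d) (ha : a = a' + 2 * k * b) (H : ThLaw a' b c' d) :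
    ThLaw a b c d := by
  intro z σ hσ
  obtain ⟨hy0, him⟩ := w_im k hσ
  have hW := th_W z σ k hσ
  have H1 := H (z / (2 * k * σ + 1)) (σ / (2 * k * σ + 1)) him
  have hys : 2 * k * σ + 1 ∈ slitPlane := by
    have := cd_slit (c := 2 * k) (d := 1) one_pos hσ
    simpa using this
  have hyi : (2 * k * σ + 1).im = 2 * k * σ.im := by simp
  have hcC : (c : ℂ) = c' + 2 * k * d := by rw [h]; push_cast; ring
  have haC : (a : ℂ) = a' + 2 * k * b := by rw [ha]; push_cast; ring
  set y := 2 * k * σ + 1 with hy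
  have hx := cd_slit (c := c') hd him
  have hx0 := slitPlane_ne_zero hx
  have hcd := cd_slit (c := c) hd hσ
  have hcd0 := slitPlane_ne_zero hcd
  have e1 : (c' * (σ / y) + d) * y = c * σ + d := by
    field_simp; rw [hcC, hy]; ring
  have e2 : (a' * (σ / y) + b) * y = a * σ + b := by
    field_simp; rw [haC, hy]; ring
  have hs := cs_mul hx hys (by
    rw [e1, hyi]
    have i1 : (c' * (σ / y) + d).im = c' * (σ / y).im := by simp
    have i2 : (c * σ + d).im = c * σ.im := by simp
    rw [i1, i2]
    intro hp
    have hck : (0 : ℝ) < c' * k := by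
      by_contra hn
      have := mul_nonneg (neg_nonneg.2 (not_lt.1 hn)) (mul_pos him hσ).le
      nlinarith
    have hc2 : (c : ℝ) * k = c' * k + 2 * k ^ 2 * d := by rw [h]; push_cast; ring
    have : 0 < (c : ℝ) * k := by rw [hc2]; positivity
    have := mul_pos this (mul_pos hσ hσ)
    nlinarith)
  have d1 : z / y / (c' * (σ / y) + d) = z / (c * σ + d) := by
    rw [div_div, mul_comm y, e1]
  have d2 : (a' * (σ / y) + b) / (c' * (σ / y) + d) = (a * σ + b) / (c * σ + d) := by
    rw [← e1, ← e2, mul_div_mul_right _ _ hy0]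
  rw [d1, d2, hW] at H1
  rw [H1, chiT_W k h, ← e1, hs]
  have e3 : cexp (Real.pi * I * c * z ^ 2 / ((c' * (σ / y) + d) * y)) =
      cexp (Real.pi * I * c' * (z / y) ^ 2 / (c' * (σ / y) + d)) *
      cexp (Real.pi * I * (2 * k) * z ^ 2 / y) := by
    rw [← Complex.exp_add]; congr 1
    have hc' : (c':ℂ) * (σ / y) + d = (c * σ + d) / y := by rw [← e1]; field_simp
    rw [hc']
    field_simp
    rw [hy, hcC]; ring
  rw [e3]; ring

theorem th_law : ∀ (n : ℕ) (a b c : ℤ) (d : ℕ), c.natAbs + d ≤ n → a * d - b * c = 1 →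
    Even b → Even c → ThLaw a b c d := by
  intro n
  induction n with
  | zero =>
    intro a b c d hn hdet
    have h1 : c = 0 := by omega
    have h2 : d = 0 := by omega
    subst h1 h2; simp at hdet
  | succ n ih =>
    intro a b c d hn hdet hb hc
    have hd : Odd d := by
      rw [← Nat.not_even_iff_odd]
      intro hd
      have : Even (a * d - b * c) := 
        (((Int.even_coe_nat d).2 hd).mul_left a).sub (hc.mul_left b)
      rw [hdet] at this
      exact absurd this (by decide)
    have hd0 : 0 < d := hd.pos
    rcases eq_or_ne c 0 with h0 | h0
    · subst h0
      have hd1 : (d:ℤ) ∣ 1 := ⟨a, by linarith⟩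
      have hd1 : d = 1 := by
        have := Int.eq_one_of_dvd_one (by positivity) hd1
        exact_mod_cast this
      subst hd1
      have ha : a = 1 := by simpa using hdet
      subst ha
      obtain ⟨k, rfl⟩ := hb
      intro z σ hσ
      have := th_add z σ k
      simp [chiT]
      rw [← this]; congr 1; ring
    have hne : c.natAbs ≠ d := by
      intro h
      obtain ⟨x, rfl⟩ := hc
      obtain ⟨y, rfl⟩ := hd
      omega
    rcases lt_or_gt_of_ne hne with hlt | hlt
    · -- T step
      rcases lt_or_gt_of_ne h0 with hs | hs
      · by_cases hp : 0 < (d : ℤ) + 2 * c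
        · obtain ⟨d', hd'⟩ := Int.eq_ofNat_of_zero_le hp.le
          have hd'o : Odd d' := by rw [Nat.odd_iff] at *; omega
          refine law_T (b' := b + 2 * a) (d' := d') (-1) hc hd hd'o (by omega) (by ring) ?_
          exact ih _ _ _ _ (by omega) (by rw [← hdet, ← hd']; ring) (hb.add (even_two_mul a)) hc
        · obtain ⟨e, he⟩ := Int.eq_ofNat_of_zero_le (show 0 ≤ -2 * c - d by omega)
          have heo : Odd e := by rw [Nat.odd_iff] at *; omega
          refine law_neg_neg (b' := -b - 2 * a) (e := e) hc hd heo hs (by omega) (by ring) ?_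
          exact ih _ _ _ _ (by omega) (by rw [← hdet, ← he]; ring) (hb.neg.sub (even_two_mul a)) hc.neg
      · by_cases hp : 0 < (d : ℤ) - 2 * c
        · obtain ⟨d', hd'⟩ := Int.eq_ofNat_of_zero_le hp.le
          have hd'o : Odd d' := by rw [Nat.odd_iff] at *; omega
          refine law_T (b' := b - 2 * a) (d' := d') 1 hc hd hd'o (by omega) (by ring) ?_
          exact ih _ _ _ _ (by omega) (by rw [← hdet, ← hd']; ring) (hb.sub (even_two_mul a)) hc
        · obtain ⟨e, he⟩ := Int.eq_ofNat_of_zero_le (show 0 ≤ 2 * c - d by omega)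
          have heo : Odd e := by rw [Nat.odd_iff] at *; omega
          refine law_neg_pos (b' := -b + 2 * a) (e := e) hc hd heo hs (by omega) (by ring) ?_
          exact ih _ _ _ _ (by omega) (by rw [← hdet, ← he]; ring) (hb.neg.add (even_two_mul a)) hc.neg
    · rcases lt_or_gt_of_ne h0 with hs | hs
      · refine law_W (a' := a + 2 * b) (c' := c + 2 * d) (-1) hd0 (by ring) (by ring) ?_
        exact ih _ _ _ _ (by omega) (by rw [← hdet]; ring) hb (hc.add (even_two_mul _))
      · refine law_W (a' := a - 2 * b) (c' := c - 2 * d) 1 hd0 (by ring) (by ring) ?_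
        exact ih _ _ _ _ (by omega) (by rw [← hdet]; ring) hb (hc.sub (even_two_mul _))

lemma th_quasi_nat (z σ : ℂ) (n : ℤ) : jacobiTheta₂ (z + n) σ = jacobiTheta₂ z σ := by
  induction n using Int.induction_on with
  | zero => simp
  | succ n ih => rw [← ih, ← jacobiTheta₂_add_left (z + ((n : ℤ) : ℂ))]; push_cast; ring_nf
  | pred n ih =>
    rw [← ih, ← jacobiTheta₂_add_left (z + ((-(n : ℤ) - 1 : ℤ) : ℂ))]; push_cast; ring_nf

lemma th_quasi (z σ : ℂ) (m : ℤ) : jacobiTheta₂ (z + m * σ) σ =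
    cexp (-Real.pi * I * (m ^ 2 * σ + 2 * m * z)) * jacobiTheta₂ z σ := by
  induction m using Int.induction_on with
  | zero => simp
  | succ n ih =>
    have := jacobiTheta₂_add_left' (z + ((n : ℤ) : ℂ) * σ) σ
    rw [ih, ← mul_assoc, ← Complex.exp_add] at this
    convert this using 2
    · push_cast; ring
    · congr 1; push_cast; ring
  | pred n ih =>
    have := jacobiTheta₂_add_left' (z + ((-(n:ℤ) - 1 : ℤ) : ℂ) * σ) σ
    rw [show z + ((-(n:ℤ) - 1 : ℤ) : ℂ) * σ + σ = z + ((-(n:ℤ) : ℤ) : ℂ) * σ by push_cast; ring,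
      ih] at this
    have h2 := congrArg (fun t => cexp (Real.pi * I * (σ + 2 * (z + ((-(n:ℤ) - 1 : ℤ) : ℂ) * σ))) * t) this
    simp only [← mul_assoc, ← Complex.exp_add] at h2
    rw [show Real.pi * I * (σ + 2 * (z + ((-(n:ℤ) - 1 : ℤ) : ℂ) * σ)) +
      -Real.pi * I * (σ + 2 * (z + ((-(n:ℤ) - 1 : ℤ) : ℂ) * σ)) = 0 by ring, Complex.exp_zero,
      one_mul] at h2
    rw [← h2]
    congr 2
    push_cast; ring

noncomputable def FT (N D : ℕ) (h : ℤ) (τ z : ℂ) : ℂ :=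
  cexp (2 * Real.pi * I * (D * τ * h ^ 2 / N + h * z)) *
    jacobiTheta₂ (2 * D * h * τ + N * z) (2 * D * N * τ)

lemma shim_eq (N D : ℕ) (hN : 0 < N) (hD : 0 < D) (h : ℤ) (τ : ℂ) (hτ : 0 < τ.im) :
    2 * Real.pi * I * shimuraTheta N D h τ =
      cexp (2 * Real.pi * I * (D * τ * h ^ 2 / N)) * (2 * Real.pi * I * h *
      jacobiTheta₂ (2 * D * h * τ) (2 * D * N * τ) + N * jacobiTheta₂' (2 * D * h * τ) (2 * D * N * τ)) := by
  have hNC : (N : ℂ) ≠ 0 := by exact_mod_cast hN.ne'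
  have him : 0 < (2 * D * N * τ : ℂ).im := by
    have : (2 * D * N * τ : ℂ) = ((2 * D * N : ℝ) : ℂ) * τ := by push_cast; ring
    rw [this, im_ofReal_mul]; positivity
  have inj : Function.Injective (fun k : ℤ => h + N * k) := by
    intro x y hxy
    have hxy' : (N : ℤ) * x = N * y := by simpa using hxy
    exact mul_left_cancel₀ (by exact_mod_cast hN.ne') hxy'
  have h1 : shimuraTheta N D h τ = ∑' k : ℤ, ((h + N * k : ℤ) : ℂ) *
      cexp (2 * Real.pi * I * D * τ * ((h + N * k : ℤ) : ℂ) ^ 2 / N) := by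
    rw [shimuraTheta, ← inj.tsum_eq]
    · apply tsum_congr
      intro k
      simp
    · intro m hm
      have : (N : ℤ) ∣ m - h := by
        by_contra hn
        simp [hn] at hm
      obtain ⟨k, hk⟩ := this
      exact ⟨k, by simp only; linarith⟩
  rw [h1, ← tsum_mul_left]
  have s1 := (hasSum_jacobiTheta₂_term (2 * D * h * τ) him).mul_left (2 * Real.pi * I * h)
  have s2 := (hasSum_jacobiTheta₂'_term (2 * D * h * τ) him).mul_left (N : ℂ)
  rw [← ((s1.add s2).mul_left _).tsum_eq]
  apply tsum_congr
  intro k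
  rw [jacobiTheta₂'_term, jacobiTheta₂_term]
  have : cexp (2 * Real.pi * I * D * τ * ((h + N * k : ℤ) : ℂ) ^ 2 / N) =
      cexp (2 * Real.pi * I * (D * τ * h ^ 2 / N)) *
      cexp (2 * Real.pi * I * k * (2 * D * h * τ) + Real.pi * I * k ^ 2 * (2 * D * N * τ)) := by
    rw [← Complex.exp_add]; congr 1; push_cast; field_simp; ring
  rw [this]; push_cast; ring

lemma FT_deriv (N D : ℕ) (hN : 0 < N) (hD : 0 < D) (h : ℤ) (τ : ℂ) (hτ : 0 < τ.im) :
    HasDerivAt (FT N D h τ) (2 * Real.pi * I * shimuraTheta N D h τ) 0 := by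
  have him : 0 < (2 * D * N * τ : ℂ).im := by
    have : (2 * D * N * τ : ℂ) = ((2 * D * N : ℝ) : ℂ) * τ := by push_cast; ring
    rw [this, im_ofReal_mul]; positivity
  have l1 : HasDerivAt (fun z : ℂ => 2 * D * h * τ + N * z) (N * 1) 0 :=
    ((hasDerivAt_id (0:ℂ)).const_mul (N : ℂ)).const_add _
  have l2 : HasDerivAt (fun z : ℂ => 2 * Real.pi * I * (D * τ * h ^ 2 / N + h * z))
      (2 * Real.pi * I * (h * 1)) 0 :=
    (((hasDerivAt_id (0:ℂ)).const_mul (h : ℂ)).const_add _).const_mul _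
  have t1 := (hasDerivAt_jacobiTheta₂_fst (2 * D * h * τ + N * 0) him).comp (0 : ℂ) l1
  have t2 := l2.cexp.mul t1
  refine t2.congr_deriv ?_
  rw [shim_eq N D hN hD h τ hτ]
  simp
  ring

lemma FT_law (N D : ℕ) (hN : 0 < N) (h : ℤ) (a b c a' b' c' : ℤ) (d : ℕ) (hd : 0 < d)
    (hD : 0 < D)
    (hdet : a * d - b * c = 1) (ha : a - 1 = 8 * N * D * a') (hb : b = 8 * N * D * b')
    (hc : c = 2 * D * N * c') (hc' : Even c') (τ : ℂ) (hτ : 0 < τ.im) (z : ℂ) :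
    FT N D h ((a * τ + b) / (c * τ + d)) (z / (c * τ + d)) =
      chiT c' d * (c * τ + d) ^ (1/2 : ℂ) * cexp (Real.pi * I * c' * N ^ 2 / (c * τ + d) * z ^ 2) *
        FT N D h τ z := by
  have hNC : (N : ℂ) ≠ 0 := by exact_mod_cast hN.ne'
  have him : 0 < (2 * D * N * τ : ℂ).im := by
    have : (2 * D * N * τ : ℂ) = ((2 * D * N : ℝ) : ℂ) * τ := by push_cast; ring
    rw [this, im_ofReal_mul]; positivity
  have hj0 : (c * τ + d : ℂ) ≠ 0 := slitPlane_ne_zero (cd_slit hd hτ)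
  have hcC : (c : ℂ) = 2 * D * N * c' := by rw [hc]; push_cast; ring
  have haC : (a : ℂ) = 1 + 8 * N * D * a' := by
    rw [show a = 1 + 8 * N * D * a' by linarith]; push_cast; ring
  have hbC : (b : ℂ) = 8 * N * D * b' := by rw [hb]; push_cast; ring
  have hdC : (a : ℂ) * d - b * c = 1 := by exact_mod_cast congrArg (Int.cast : ℤ → ℂ) hdet
  have key : 1 + (c : ℂ) * (a * τ + b) = a * (c * τ + d) := by linear_combination -hdC
  have hj : (c' : ℂ) * (2 * D * N * τ) + d = c * τ + d := by rw [hcC]; ring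
  have L := th_law _ a (2 * D * N * b) c' d le_rfl (by rw [← hdet, hc]; ring)
    (by rw [mul_assoc, mul_assoc]; exact even_two_mul _) hc'
    (2 * D * h * (a * τ + b) + N * z) (2 * D * N * τ) him
  rw [hj] at L
  have w1 : (2 * D * h * (a * τ + b) + N * z : ℂ) =
      (2 * D * h * τ + N * z) + ((8 * D * a' * h : ℤ) : ℂ) * (2 * D * N * τ) +
        ((2 * D * h * b : ℤ) : ℂ) := by
    rw [haC]; push_cast; ring
  have L2 : jacobiTheta₂ (2 * D * h * (a * τ + b) + N * z) (2 * D * N * τ) =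
      cexp (-Real.pi * I * (((8 * D * a' * h : ℤ) : ℂ) ^ 2 * (2 * D * N * τ) +
        2 * ((8 * D * a' * h : ℤ) : ℂ) * (2 * D * h * τ + N * z))) *
      jacobiTheta₂ (2 * D * h * τ + N * z) (2 * D * N * τ) := by
    rw [w1, th_quasi_nat, th_quasi]
  rw [L2] at L
  rw [FT, FT]
  have g1 : (2 * D * h * ((a * τ + b) / (c * τ + d)) + N * (z / (c * τ + d)) : ℂ) =
    (2 * D * h * (a * τ + b) + N * z) / (c * τ + d) := by ring
  have g2 : (2 * D * N * ((a * τ + b) / (c * τ + d)) : ℂ) =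
    (a * (2 * D * N * τ) + ((2 * D * N * b : ℤ) : ℂ)) / (c * τ + d) := by push_cast; ring
  rw [g1, g2, L]
  generalize (c * τ + d : ℂ) = j at *
  have ex : cexp (2 * Real.pi * I * (D * ((a * τ + b) / j) * h ^ 2 / N + h * (z / j))) *
      cexp (Real.pi * I * c' * (2 * D * h * (a * τ + b) + N * z) ^ 2 / j) *
      cexp (-Real.pi * I * (((8 * D * a' * h : ℤ) : ℂ) ^ 2 * (2 * D * N * τ) +
        2 * ((8 * D * a' * h : ℤ) : ℂ) * (2 * D * h * τ + N * z))) =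
      cexp (Real.pi * I * c' * N ^ 2 / j * z ^ 2) *
      cexp (2 * Real.pi * I * (D * τ * h ^ 2 / N + h * z)) := by
    have one := Complex.exp_int_mul_two_pi_mul_I (8 * D ^ 2 * h ^ 2 * a * b')
    rw [← mul_one (cexp (Real.pi * I * c' * N ^ 2 / j * z ^ 2) * _), ← one]
    simp only [← Complex.exp_add]
    congr 1
    have m0 : ((8 * D * a' * h : ℤ) : ℂ) = h * (a - 1) / N := by
      rw [haC]; push_cast; field_simp; ring
    have m1 : ((8 * D ^ 2 * h ^ 2 * a * b' : ℤ) : ℂ) = D * h ^ 2 * a * b / N := by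
      rw [hbC]; push_cast; field_simp
    have m2 : (c' : ℂ) * D * N * 2 = c := by rw [hcC]; ring
    rw [m0, m1]
    field_simp
    linear_combination (2 * D * h ^ 2 * (a * τ + b) + 2 * h * z * N) * key + 
      (2 * D * h ^ 2 * (a * τ + b) ^ 2 + 2 * h * z * N * (a * τ + b)) * m2
  linear_combination (chiT c' d * j ^ (1/2 : ℂ) *
    jacobiTheta₂ (2 * D * h * τ + N * z) (2 * D * N * τ)) * ex

lemma mob_im (a b c : ℤ) (d : ℕ) (hd : 0 < d) (hdet : a * d - b * c = 1) (τ : ℂ) (hτ : 0 < τ.im) :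
    0 < (((a : ℂ) * τ + b) / (c * τ + d)).im := by
  have hj0 : (c * τ + d : ℂ) ≠ 0 := slitPlane_ne_zero (cd_slit hd hτ)
  rw [div_im, ← sub_div]
  apply div_pos _ (normSq_pos.2 hj0)
  have : (a : ℝ) * d - b * c = 1 := by exact_mod_cast congrArg (Int.cast : ℤ → ℝ) hdet
  simp
  nlinarith

theorem shim_law (N D : ℕ) (hN : 0 < N) (h : ℤ) (a b c a' b' c' : ℤ) (d : ℕ) (hd : 0 < d)
    (hD : 0 < D)
    (hdet : a * d - b * c = 1) (ha : a - 1 = 8 * N * D * a') (hb : b = 8 * N * D * b')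
    (hc : c = 2 * D * N * c') (hc' : Even c') (τ : ℂ) (hτ : 0 < τ.im) :
    shimuraTheta N D h ((a * τ + b) / (c * τ + d)) =
      chiT c' d * (c * τ + d) ^ (1/2 : ℂ) * (c * τ + d) * shimuraTheta N D h τ := by
  have hj0 : (c * τ + d : ℂ) ≠ 0 := slitPlane_ne_zero (cd_slit hd hτ)
  have F1 := FT_deriv N D hN hD h _ (mob_im a b c d hd hdet τ hτ)
  have F2 := FT_deriv N D hN hD h τ hτ
  have law := FT_law N D hN h a b c a' b' c' d hd hD hdet ha hb hc hc' τ hτ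
  generalize (c * τ + d : ℂ) = j at *
  have l1 : HasDerivAt (fun z : ℂ => z / j) (1 / j) 0 := (hasDerivAt_id (0:ℂ)).div_const j
  rw [show (0:ℂ) = 0 / j by simp] at F1
  have G1 := F1.comp (0:ℂ) l1
  have l2 : HasDerivAt (fun z : ℂ => Real.pi * I * c' * N ^ 2 / j * z ^ 2)
      (Real.pi * I * c' * N ^ 2 / j * ((2:ℕ) * (0:ℂ) ^ (2 - 1))) 0 :=
    (hasDerivAt_pow 2 (0:ℂ)).const_mul _
  have G2 := (l2.cexp.const_mul (chiT c' d * j ^ (1/2:ℂ))).mul F2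
  have E : (FT N D h ((a * τ + b) / j) ∘ fun z : ℂ => z / j) = 
     ((fun z : ℂ => chiT c' d * j ^ (1/2:ℂ) * cexp (Real.pi * I * c' * N ^ 2 / j * z ^ 2)) *
        FT N D h τ) := by
    funext z; exact law z
  rw [E] at G1
  have := G1.unique G2
  simp at this
  have hpi : (Real.pi : ℂ) ≠ 0 := by exact_mod_cast Real.pi_ne_zero
  field_simp at this
  linear_combination this

theorem shimura_theta_slash_invariant (N D : ℕ) (hN : 0 < N) (hD : 0 < D) (h : ℤ)
    (γ : Matrix.SpecialLinearGroup (Fin 2) ℤ)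
    (hd : 0 < γ.1 1 1)
    (ha : (8 * N * D : ℤ) ∣ (γ.1 0 0 - 1)) (hdd : (8 * N * D : ℤ) ∣ (γ.1 1 1 - 1))
    (hb : (8 * N * D : ℤ) ∣ γ.1 0 1) (hc : (8 * N * D : ℤ) ∣ γ.1 1 0)
    (τ : ℂ) (hτ : 0 < τ.im) :
    ((jacobiSym (γ.1 1 0) (γ.1 1 1).toNat : ℤ) : ℂ) ^ 3 *
        (if (γ.1 1 1) % 4 = 1 then (1 : ℂ) else Complex.I) ^ 3 *
        ((γ.1 1 0 : ℂ) * τ + (γ.1 1 1 : ℂ)) ^ (-(3 : ℂ) / 2) *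
        shimuraTheta N D h
          (((γ.1 0 0 : ℂ) * τ + (γ.1 0 1 : ℂ)) / ((γ.1 1 0 : ℂ) * τ + (γ.1 1 1 : ℂ))) =
      shimuraTheta N D h τ := by
  have hdet : γ.1 0 0 * γ.1 1 1 - γ.1 0 1 * γ.1 1 0 = 1 := by
    rw [← Matrix.det_fin_two]; exact γ.2
  generalize γ.1 0 0 = a at *
  generalize γ.1 0 1 = b at *
  generalize γ.1 1 0 = c at *
  generalize γ.1 1 1 = d0 at *
  obtain ⟨d, rfl⟩ := Int.eq_ofNat_of_zero_le hd.le
  have hd' : 0 < d := by exact_mod_cast hd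
  obtain ⟨a', ha'⟩ := ha
  obtain ⟨b', hb'⟩ := hb
  obtain ⟨c', hc'⟩ := hc
  obtain ⟨d', hd1⟩ := hdd
  have L := shim_law N D hN h a b c a' b' (4 * c') d hd' hD hdet ha' hb' (by rw [hc']; ring)
    ⟨2 * c', by ring⟩ τ hτ
  have hd4 : (d : ℤ) % 4 = 1 := by
    have : (d : ℤ) = 1 + 4 * (2 * N * D * d') := by linarith
    omega
  have hd4' : d % 4 = 1 := by omega
  have hdo : Odd d := by rw [Nat.odd_iff]; omega
  have hND : jacobiSym ((N * D : ℕ) : ℤ) d = 1 := by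
    rw [jacobiSym.mod_right _ hdo, Int.natAbs_natCast]
    have hm : d % (4 * (N * D)) = 1 % (4 * (N * D)) := by
      have : ((4 * (N * D) : ℕ) : ℤ) ∣ ((1 : ℕ) : ℤ) - d := by
        refine ⟨-2 * d', ?_⟩
        push_cast
        linarith
      exact Nat.modEq_iff_dvd.2 this
    have hpos : 0 < N * D := Nat.mul_pos hN hD
    rw [hm, Nat.mod_eq_of_lt (by omega), jacobiSym.one_right]
  have hJ : jacobiSym c d = jacobiSym (2 * (4 * c')) d := by
    rw [hc', show (8 * N * D * c' : ℤ) = ((N * D : ℕ) : ℤ) * (2 * (4 * c')) by push_cast; ring,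
      jacobiSym.mul_left, hND, one_mul]
  have hcop : c.gcd d = 1 := by
    rw [← Int.isCoprime_iff_gcd_eq_one]
    exact ⟨-b, a, by linarith⟩
  have hJ2 : ((jacobiSym c d : ℤ) : ℂ) ^ 2 = 1 := by
    exact_mod_cast congrArg (Int.cast : ℤ → ℂ) (jacobiSym.sq_one hcop)
  have hj0 : (c * τ + d : ℂ) ≠ 0 := slitPlane_ne_zero (cd_slit hd' hτ)
  rw [chiT, ← hJ, if_pos hd4', mul_one] at L
  simp only [Int.ofNat_eq_natCast, Int.toNat_natCast, if_pos hd4, Int.cast_natCast]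
  rw [L]
  generalize (c * τ + d : ℂ) = j at *
  have hp : j ^ (-(3:ℂ)/2) * (j ^ (1/2:ℂ) * j) = 1 := by
    nth_rewrite 3 [← Complex.cpow_one j]
    rw [← Complex.cpow_add _ _ hj0, ← Complex.cpow_add _ _ hj0]
    norm_num
  generalize ((jacobiSym c d : ℤ) : ℂ) = J at *
  linear_combination (J ^ 4 * shimuraTheta N D h τ) * hp +
    (J ^ 2 + 1) * shimuraTheta N D h τ * hJ2
end

section
/- For every m ∈ ℤ, lim_{δ→0⁺} (1/(2π)) ∫_{A_δ} e^{imθ}/(e^{iθ} − e^{−iθ}) dθ = (1/2)·sgn_o(m), where A_δ := [δ, π−δ] ∪ [π+δ, 2π−δ]. Equivalently, the Cauchy principal value (1/(2πi)) PV ∫_{|w|=1} w^m/(w − w^{−1}) · dw/w, taken by excluding symmetric small arcs around w = 1 and w = −1, equals (1/2)·sgn_o(m). -/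
open MeasureTheory Filter Topology Complex

/-- `sgn_o(m) = sgn(m)` for odd `m` and `0` for even `m`. -/
def sgnOdd (m : ℤ) : ℤ := if Odd m then m.sign else 0

/-- The domain `A_δ = [δ, π−δ] ∪ [π+δ, 2π−δ]` excluding small arcs around `θ = 0, π`. -/
def Aset (δ : ℝ) : Set ℝ :=
  Set.Icc δ (Real.pi - δ) ∪ Set.Icc (Real.pi + δ) (2 * Real.pi - δ)

noncomputable def pvF (m : ℤ) (θ : ℝ) : ℂ := Complex.exp (Complex.I * (m : ℂ) * (θ : ℝ)) /
          (Complex.exp (Complex.I * (θ : ℝ)) - Complex.exp (-Complex.I * (θ : ℝ)))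

lemma pv_refl (m : ℤ) (θ : ℝ) : pvF m (2 * Real.pi - θ) = - pvF (-m) θ := by
  unfold pvF
  have h1 : Complex.exp (Complex.I * (m : ℂ) * ((2 * Real.pi - θ : ℝ) : ℂ))
      = Complex.exp (Complex.I * ((-m : ℤ) : ℂ) * (θ : ℝ)) := by
    rw [Complex.exp_eq_exp_iff_exists_int]
    exact ⟨m, by push_cast; ring⟩
  have h2 : Complex.exp (Complex.I * ((2 * Real.pi - θ : ℝ) : ℂ))
      = Complex.exp (-Complex.I * (θ : ℝ)) := by
    rw [Complex.exp_eq_exp_iff_exists_int]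
    exact ⟨1, by push_cast; ring⟩
  have h3 : Complex.exp (-Complex.I * ((2 * Real.pi - θ : ℝ) : ℂ))
      = Complex.exp (Complex.I * (θ : ℝ)) := by
    rw [Complex.exp_eq_exp_iff_exists_int]
    exact ⟨-1, by push_cast; ring⟩
  rw [h1, h2, h3, ← div_neg, neg_sub]

lemma pv_meas (δ : ℝ) : MeasurableSet (Aset δ) :=
  measurableSet_Icc.union measurableSet_Icc

lemma pv_mem (δ θ : ℝ) : 2 * Real.pi - θ ∈ Aset δ ↔ θ ∈ Aset δ := by
  simp only [Aset, Set.mem_union, Set.mem_Icc]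
  constructor
  · rintro (⟨h, h'⟩ | ⟨h, h'⟩)
    · right; constructor <;> linarith
    · left; constructor <;> linarith
  · rintro (⟨h, h'⟩ | ⟨h, h'⟩)
    · right; constructor <;> linarith
    · left; constructor <;> linarith

lemma pv_int_neg (m : ℤ) (δ : ℝ) :
    ∫ θ in Aset δ, pvF (-m) θ = - ∫ θ in Aset δ, pvF m θ := by
  rw [← integral_indicator (pv_meas δ), ← integral_indicator (pv_meas δ),
    ← integral_sub_left_eq_self (fun θ => (Aset δ).indicator (pvF m) θ) volume (2 * Real.pi),
    ← integral_neg]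
  congr 1
  ext θ
  by_cases h : θ ∈ Aset δ
  · rw [Set.indicator_of_mem h, Set.indicator_of_mem ((pv_mem δ θ).2 h), pv_refl, neg_neg]
  · rw [Set.indicator_of_notMem h, Set.indicator_of_notMem (fun h' => h ((pv_mem δ θ).1 h')),
      neg_zero]

lemma pv_denom {δ θ : ℝ} (hδ : 0 < δ) (h : θ ∈ Aset δ) :
    Complex.exp (Complex.I * (θ : ℝ)) - Complex.exp (-Complex.I * (θ : ℝ)) ≠ 0 := by
  have hs : Real.sin θ ≠ 0 := by
    rcases h with ⟨h, h'⟩ | ⟨h, h'⟩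
    · exact (Real.sin_pos_of_pos_of_lt_pi (by linarith) (by linarith)).ne'
    · have := Real.sin_pos_of_pos_of_lt_pi (x := θ - Real.pi) (by linarith) (by linarith)
      rw [Real.sin_sub_pi] at this
      linarith
  have : Complex.exp (Complex.I * (θ : ℝ)) - Complex.exp (-Complex.I * (θ : ℝ))
      = 2 * Complex.I * (Real.sin θ : ℂ) := by
    rw [mul_comm, neg_mul, mul_comm Complex.I, ← neg_mul, Complex.exp_mul_I, Complex.exp_mul_I,
      Complex.cos_neg, Complex.sin_neg, Complex.ofReal_sin]
    ring
  rw [this]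
  have : (Real.sin θ : ℂ) ≠ 0 := by exact_mod_cast hs
  simp [this, -Complex.ofReal_sin]

lemma pv_integrable (m : ℤ) {δ : ℝ} (hδ : 0 < δ) : IntegrableOn (pvF m) (Aset δ) := by
  apply ContinuousOn.integrableOn_compact (isCompact_Icc.union isCompact_Icc)
  unfold pvF
  apply ContinuousOn.div (by fun_prop) (by fun_prop)
  intro θ h
  exact pv_denom hδ h

lemma pv_step (m : ℤ) {δ : ℝ} (hδ : 0 < δ) :
    ∫ θ in Aset δ, pvF (m + 1) θ = (∫ θ in Aset δ, pvF (m - 1) θ)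
      + ∫ θ in Aset δ, Complex.exp (Complex.I * (m : ℂ) * (θ : ℝ)) := by
  rw [← integral_add (pv_integrable _ hδ)]
  · apply setIntegral_congr_fun (pv_meas δ)
    intro θ h
    have hd := pv_denom hδ h
    simp only [pvF]
    rw [div_add' _ _ _ hd]
    congr 1
    rw [mul_sub, ← Complex.exp_add, ← Complex.exp_add]
    push_cast
    ring_nf
  · exact ContinuousOn.integrableOn_compact (isCompact_Icc.union isCompact_Icc) (by fun_prop)

lemma pv_full (m : ℤ) : ∫ θ in (0:ℝ)..(2 * Real.pi), Complex.exp (Complex.I * (m : ℂ) * (θ : ℝ))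
    = if m = 0 then 2 * (Real.pi : ℂ) else 0 := by
  split_ifs with h
  · simp [h]
  · have hc : Complex.I * (m : ℂ) ≠ 0 := by simp [h]
    rw [integral_exp_mul_complex hc]
    have : Complex.exp (Complex.I * (m : ℂ) * ((2 * Real.pi : ℝ) : ℂ)) = 1 := by
      rw [Complex.exp_eq_one_iff]
      exact ⟨m, by push_cast; ring⟩
    rw [this]; simp

lemma pv_lim (m : ℤ) : Tendsto (fun δ : ℝ =>
      ∫ θ in Aset δ, Complex.exp (Complex.I * (m : ℂ) * (θ : ℝ))) (𝓝[>] (0 : ℝ))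
      (𝓝 (if m = 0 then 2 * (Real.pi : ℂ) else 0)) := by
  set g : ℝ → ℂ := fun θ => Complex.exp (Complex.I * (m : ℂ) * (θ : ℝ)) with hg
  have gc : Continuous g := by fun_prop
  have gi : ∀ a b, IntervalIntegrable g volume a b := fun a b => gc.intervalIntegrable a b
  have hP : Continuous (fun x : ℝ => ∫ θ in (0:ℝ)..x, g θ) :=
    intervalIntegral.continuous_primitive gi 0
  set P : ℝ → ℂ := fun x => ∫ θ in (0:ℝ)..x, g θ with hPd
  have h1 : Tendsto (fun δ : ℝ => (P (Real.pi - δ) - P δ) +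
      (P (2 * Real.pi - δ) - P (Real.pi + δ))) (𝓝[>] (0 : ℝ)) (𝓝 (P (2 * Real.pi))) := by
    have hc : Continuous (fun δ : ℝ => (P (Real.pi - δ) - P δ) +
      (P (2 * Real.pi - δ) - P (Real.pi + δ))) := by fun_prop
    have := (hc.tendsto 0).mono_left (nhdsWithin_le_nhds (s := Set.Ioi 0))
    have h0 : P 0 = 0 := by simp [hPd]
    simpa [h0] using this
  rw [← pv_full m]
  refine h1.congr' ?_
  have hpi := Real.pi_pos
  filter_upwards [Ioo_mem_nhdsGT (show (0:ℝ) < Real.pi / 2 by linarith)] with δ hδ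
  obtain ⟨hδ, hδ'⟩ := hδ
  simp only [hPd]
  rw [intervalIntegral.integral_interval_sub_left (gi _ _) (gi _ _),
    intervalIntegral.integral_interval_sub_left (gi _ _) (gi _ _),
    intervalIntegral.integral_of_le (by linarith), intervalIntegral.integral_of_le (by linarith),
    ← integral_Icc_eq_integral_Ioc, ← integral_Icc_eq_integral_Ioc, Aset,
    setIntegral_union _ measurableSet_Icc gc.continuousOn.integrableOn_Icc
      gc.continuousOn.integrableOn_Icc]
  rw [Set.disjoint_left]
  rintro x ⟨_, h⟩ ⟨h', _⟩
  linarith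

def PVL (m : ℤ) : Prop := Tendsto (fun δ : ℝ => ∫ θ in Aset δ, pvF m θ) (𝓝[>] (0 : ℝ))
  (𝓝 ((Real.pi : ℂ) * (sgnOdd m : ℂ)))

lemma pvl_zero : PVL 0 := by
  have : ∀ δ, ∫ θ in Aset δ, pvF 0 θ = 0 := by
    intro δ
    have := pv_int_neg 0 δ
    rw [neg_zero] at this
    exact self_eq_neg.1 this
  simp [PVL, this, sgnOdd]

lemma pvl_one : PVL 1 := by
  have h := (pv_lim 0).div_const 2
  have e : (if (0:ℤ) = 0 then 2 * (Real.pi : ℂ) else 0) / 2 = (Real.pi : ℂ) * (sgnOdd 1 : ℂ) := by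
    simp [sgnOdd]
  rw [e] at h
  refine h.congr' ?_
  filter_upwards [self_mem_nhdsWithin] with δ hδ
  have h1 := pv_step 0 (δ := δ) hδ
  rw [zero_sub, zero_add, pv_int_neg] at h1
  linear_combination (-1/2) * h1

lemma sgn_step (m : ℤ) : (Real.pi : ℂ) * (sgnOdd (m + 1) : ℂ) =
    (Real.pi : ℂ) * (sgnOdd (m - 1) : ℂ) + (if m = 0 then 2 * (Real.pi : ℂ) else 0) := by
  have : sgnOdd (m + 1) = sgnOdd (m - 1) + if m = 0 then 2 else 0 := by
    unfold sgnOdd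
    by_cases hm : Odd (m + 1)
    · have hm' : Odd (m - 1) := by grind
      rw [if_pos hm, if_pos hm']
      rcases lt_trichotomy m 0 with h | h | h
      · have : m + 1 < 0 := by grind
        rw [Int.sign_eq_neg_one_of_neg this, Int.sign_eq_neg_one_of_neg (by omega), if_neg (by omega)]
        rfl
      · subst h; decide
      · have : 0 < m - 1 := by grind
        rw [Int.sign_eq_one_of_pos this, Int.sign_eq_one_of_pos (by omega), if_neg (by omega)]
        rfl
    · have hm' : ¬ Odd (m - 1) := by grind
      rw [if_neg hm, if_neg hm', if_neg (by rintro rfl; exact hm (by decide))]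
      rfl
  rw [this]
  split_ifs <;> push_cast <;> ring

lemma pvl_iff (m : ℤ) : PVL (m + 1) ↔ PVL (m - 1) := by
  unfold PVL
  rw [sgn_step]
  constructor
  · intro h
    have := h.sub (pv_lim m)
    rw [add_sub_cancel_right] at this
    refine this.congr' ?_
    filter_upwards [self_mem_nhdsWithin] with δ hδ
    rw [pv_step m (δ := δ) hδ, add_sub_cancel_right]
  · intro h
    refine (h.add (pv_lim m)).congr' ?_
    filter_upwards [self_mem_nhdsWithin] with δ hδ
    rw [pv_step m (δ := δ) hδ]

lemma pvl_all (m : ℤ) : PVL m ∧ PVL (m + 1) := by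
  induction m using Int.induction_on with
  | zero => exact ⟨pvl_zero, by simpa using pvl_one⟩
  | succ n ih =>
    refine ⟨ih.2, (pvl_iff _).2 ?_⟩
    simpa using ih.1
  | pred n ih =>
    refine ⟨(pvl_iff _).1 ih.2, ?_⟩
    simpa using ih.1

theorem pv_integral_sgn_odd (m : ℤ) :
    Tendsto (fun δ : ℝ => (1 / (2 * (Real.pi : ℂ))) *
        ∫ θ in Aset δ, Complex.exp (Complex.I * (m : ℂ) * (θ : ℝ)) /
          (Complex.exp (Complex.I * (θ : ℝ)) - Complex.exp (-Complex.I * (θ : ℝ))))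
      (𝓝[>] (0 : ℝ)) (𝓝 ((1 / 2 : ℂ) * (sgnOdd m : ℂ))) := by
  have h := ((pvl_all m).1).const_mul (1 / (2 * (Real.pi : ℂ)))
  have hpi : (Real.pi : ℂ) ≠ 0 := by exact_mod_cast Real.pi_ne_zero
  have e : (1 / (2 * (Real.pi : ℂ))) * ((Real.pi : ℂ) * (sgnOdd m : ℂ))
      = (1 / 2 : ℂ) * (sgnOdd m : ℂ) := by
    field_simp
  rw [e] at h
  exact h
end
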